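/- For every sequence of injective maps x_n : Fin n → ℝ (n ≥ 3), consider the random graph process on Fin n, and let τ be the least time 0 ≤ t ≤ N such that both: (i) every index has degree at least 1 in G_t, and (ii) every index u of degree exactly 1 in G_t, with unique neighbour v, forms a secure ordered pair (u,v). Then the probability that the whole set Fin n is reconstructible from G_τ while Fin n is not reconstructible from G_t for every t < τ tends to 1 as n → ∞. -/

import Mathlib

def Reconstructible {n : ℕ} (x : Fin n → ℝ) (P : Set (Sym2 (Fin n))) (U : Set (Fin n)) : Prop :=
  ∀ w : Fin n → ℝ, Function.Injective w →
    (∀ i j : Fin n, s(i, j) ∈ P → |w i - w j| = |x i - x j|) →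
    ∀ i ∈ U, ∀ j ∈ U, |w i - w j| = |x i - x j|

instance (n : ℕ) : Nonempty (Fin (n.choose 2) ≃ {e : Sym2 (Fin n) // ¬ e.IsDiag}) := by
  have h : Fintype.card {e : Sym2 (Fin n) // ¬ e.IsDiag} = n.choose 2 := by
    simpa using Sym2.card_subtype_not_diag (α := Fin n)
  exact ⟨(Fintype.equivFinOfCardEq h).symm⟩

instance (n : ℕ) : MeasurableSpace (Fin (n.choose 2) ≃ {e : Sym2 (Fin n) // ¬ e.IsDiag}) := ⊤

/-- The uniform measure on orderings of the `N = n.choose 2` unordered pairs of distinct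
indices of `Fin n`, modelling the random graph process. -/
noncomputable def processMeasure (n : ℕ) :
    MeasureTheory.Measure (Fin (n.choose 2) ≃ {e : Sym2 (Fin n) // ¬ e.IsDiag}) :=
  (PMF.uniformOfFintype _).toMeasure

/-- `Gt σ t` is the set of the first `t` revealed pairs in the ordering `σ`. -/
def Gt {n : ℕ} (σ : Fin (n.choose 2) ≃ {e : Sym2 (Fin n) // ¬ e.IsDiag}) (t : ℕ) :
    Set (Sym2 (Fin n)) :=
  {e | ∃ s : Fin (n.choose 2), (s : ℕ) < t ∧ (σ s : Sym2 (Fin n)) = e}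

/-- The degree of an index `u`: the number of revealed pairs containing `u`. -/
noncomputable def degree {n : ℕ} (G : Set (Sym2 (Fin n))) (u : Fin n) : ℕ :=
  {e ∈ G | u ∈ e}.ncard

/-- A pair `(u, v)` is secure if the reflection of `x u` over `x v` is also a point. -/
def Secure {n : ℕ} (x : Fin n → ℝ) (u v : Fin n) : Prop :=
  u ≠ v ∧ ∃ ℓ : Fin n, x ℓ = 2 * x v - x u

/-!
Give the pairs independent uniform labels in `[0, 1]`: their increasing order is a uniform random
enumeration, and the pairs with label below `p` form a binomial random graph. The thresholds
`(9 / 10) * log n / n` and `3 * log n / n` thus produce random graphs `G₀ ≤ G₁`. Whp `G₀` still has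
an isolated vertex while `G₁` has minimum degree at least two, so `G₀ ≤ G_τ ≤ G₁`.

*Necessity.* An isolated vertex can be moved freely, and a leaf can be reflected in its neighbour
unless that reflection is already one of the points, so no earlier graph determines the distances.

*Sufficiency.* Let `w` have the edge lengths of `x` on `G_τ`. Each edge preserves `w - x` or
`w + x`. As linear-sized vertex sets are joined by edges of `G₀`, some level set of `w - x` (or of
`w + x`, after negating `w`) is linear-sized. A vertex outside it sends at most one edge into it,
since all such neighbours `j` have the same `x j`; by expansion there are few vertices outside,
and by sparseness of small sets they all have small degree in `G₀`. Whp vertices of small degree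
are far apart in `G₁`, so a vertex `i` outside is a leaf of `G_τ` with its neighbour `j` inside.
Then `w` places `i` at the translate of the reflected point `2 * x j - x i`. By security the
latter is a point `x ℓ`; injectivity of `w` forces `ℓ` outside as well, so `i` and `ℓ` both have
small degree, and whp this excludes the edge `ij`.
-/

namespace LineReconstruction

open Finset MeasureTheory Filter Topology

/-! ### Moment bounds for independent uniform labels -/

theorem measureReal_exists_le_sum {Ω κ : Type*} [MeasurableSpace Ω] {μ : Measure Ω}
    [IsFiniteMeasure μ] {s : Finset κ} {P : κ → Ω → Prop} {b : κ → ℝ}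
    (h : ∀ i ∈ s, μ.real {ω | P i ω} ≤ b i) :
    μ.real {ω | ∃ i ∈ s, P i ω} ≤ ∑ i ∈ s, b i := by
  have hUnion : {ω | ∃ i ∈ s, P i ω} = ⋃ i ∈ s, {ω | P i ω} := by ext; simp
  rw [hUnion]
  exact (measureReal_biUnion_finset_le s _).trans (sum_le_sum h)

section SecondMoment

variable {Ω κ : Type*} [MeasurableSpace Ω] {μ : Measure Ω} [IsProbabilityMeasure μ]

theorem measureReal_le_inv_mul_integral {f : Ω → ℝ} {A : Set Ω} {c : ℝ} (hf : 0 ≤ f)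
    (hfi : Integrable f μ) (hc : 0 < c) (hA : ∀ ω ∈ A, c ≤ f ω) :
    μ.real A ≤ c⁻¹ * ∫ ω, f ω ∂μ := by
  have hmarkov := mul_meas_ge_le_integral_of_nonneg (Filter.Eventually.of_forall hf) hfi c
  have hmono : μ.real A ≤ μ.real {ω | c ≤ f ω} := measureReal_mono hA
  rw [← div_eq_inv_mul, le_div_iff₀ hc, mul_comm]
  exact (mul_le_mul_of_nonneg_left hmono hc.le).trans hmarkov

theorem integrable_sum_indicator_sub_sq [Fintype κ] {A : κ → Set Ω}
    (hA : ∀ i, MeasurableSet (A i)) (c : ℝ) :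
    Integrable (fun ω => (∑ i, (A i).indicator (1 : Ω → ℝ) ω - c) ^ 2) μ := by
  have hindicator (i : κ) : MemLp ((A i).indicator (1 : Ω → ℝ)) 2 μ :=
    memLp_indicator_const 2 (hA i) (1 : ℝ) (Or.inr (measure_ne_top μ (A i)))
  have hsum : MemLp (fun ω => ∑ i, (A i).indicator (1 : Ω → ℝ) ω) 2 μ :=
    memLp_finsetSum univ fun i _ => hindicator i
  have hconst : MemLp (fun _ : Ω => c) 2 μ := memLp_const c
  exact (hsum.sub hconst).integrable_sq

theorem integral_sum_indicator_sub_sq [Fintype κ] {A : κ → Set Ω}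
    (hA : ∀ i, MeasurableSet (A i)) (c : ℝ) :
    ∫ ω, (∑ i, (A i).indicator (1 : Ω → ℝ) ω - c) ^ 2 ∂μ =
      ∑ i, ∑ j, μ.real (A i ∩ A j) - 2 * c * ∑ i, μ.real (A i) + c ^ 2 := by
  have hexpand (ω : Ω) : (∑ i, (A i).indicator (1 : Ω → ℝ) ω - c) ^ 2 =
      ∑ i, ∑ j, (A i ∩ A j).indicator (1 : Ω → ℝ) ω - 2 * c * ∑ i, (A i).indicator 1 ω
        + c ^ 2 := by
    simp only [Set.inter_indicator_one, Pi.mul_apply, ← sum_mul_sum]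
    ring
  have hint {B : Set Ω} (hB : MeasurableSet B) : Integrable (B.indicator (1 : Ω → ℝ)) μ :=
    (integrable_const (1 : ℝ)).indicator hB
  have hsingle : Integrable (fun ω => ∑ i, (A i).indicator (1 : Ω → ℝ) ω) μ :=
    integrable_finsetSum _ fun i _ => hint (hA i)
  have hrow (i : κ) : Integrable (fun ω => ∑ j, (A i ∩ A j).indicator (1 : Ω → ℝ) ω) μ :=
    integrable_finsetSum _ fun j _ => hint ((hA i).inter (hA j))
  have hpairs : Integrable (fun ω => ∑ i, ∑ j, (A i ∩ A j).indicator (1 : Ω → ℝ) ω) μ :=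
    integrable_finsetSum _ fun i _ => hrow i
  simp_rw [hexpand]
  rw [integral_add (hpairs.sub' (hsingle.const_mul _)) (integrable_const _),
    integral_sub hpairs (hsingle.const_mul _), integral_const_mul,
    integral_finsetSum _ fun i _ => hrow i, integral_finsetSum _ fun i _ => hint (hA i)]
  simp only [integral_finsetSum _ fun j _ => hint ((hA _).inter (hA j)),
    integral_indicator_one (hA _), integral_indicator_one ((hA _).inter (hA _)),
    integral_const, probReal_univ, one_smul]

theorem measureReal_iInter_compl_le [Fintype κ] {A : κ → Set Ω} (hA : ∀ i, MeasurableSet (A i))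
    (hM : 0 < ∑ i, μ.real (A i)) :
    μ.real (⋂ i, (A i)ᶜ) ≤
      (∑ i, ∑ j, μ.real (A i ∩ A j)) / (∑ i, μ.real (A i)) ^ 2 - 1 := by
  set M := ∑ i, μ.real (A i) with hMdef
  have hchebyshev : μ.real (⋂ i, (A i)ᶜ) ≤
      (M ^ 2)⁻¹ * ∫ ω, (∑ i, (A i).indicator (1 : Ω → ℝ) ω - M) ^ 2 ∂μ := by
    refine measureReal_le_inv_mul_integral (fun ω => sq_nonneg _)
      (integrable_sum_indicator_sub_sq hA M) (by positivity) fun ω hω => ?_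
    have hzero : ∑ i, (A i).indicator (1 : Ω → ℝ) ω = 0 :=
      sum_eq_zero fun i _ => Set.indicator_of_notMem (Set.mem_iInter.1 hω i) _
    rw [hzero, zero_sub, neg_sq]
  rw [integral_sum_indicator_sub_sq hA M, ← hMdef] at hchebyshev
  convert hchebyshev using 1
  field_simp
  ring

end SecondMoment

section UniformLabels

variable {ι : Type*} [Fintype ι]

theorem ite_lt_eq_indicator_add (p : unitInterval) (a b : ℝ) :
    (fun x : unitInterval => if x < p then a else b) =
      (Set.Iio p).indicator (fun _ => a - b) + fun _ => b := by
  funext x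
  by_cases hx : x < p <;> simp [hx]

theorem integrable_ite_lt (p : unitInterval) (a b : ℝ) :
    Integrable (fun x : unitInterval => if x < p then a else b) := by
  rw [ite_lt_eq_indicator_add]
  exact ((integrable_const _).indicator measurableSet_Iio).add (integrable_const _)

theorem integral_ite_lt (p : unitInterval) (a b : ℝ) :
    ∫ x : unitInterval, (if x < p then a else b) = p * a + (1 - p) * b := by
  have hIio : volume.real (Set.Iio p) = p := by simp [Measure.real, p.2.1]
  rw [ite_lt_eq_indicator_add, integral_add' ((integrable_const _).indicator measurableSet_Iio)
    (integrable_const _), integral_indicator_const _ measurableSet_Iio, hIio]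
  simp only [smul_eq_mul, integral_const, probReal_univ]
  ring

theorem integrable_prod_ite_lt (p : ι → unitInterval) (a b : ι → ℝ) :
    Integrable fun u : ι → unitInterval => ∏ e, if u e < p e then a e else b e :=
  Integrable.fintype_prod fun e => integrable_ite_lt (p e) (a e) (b e)

theorem integral_prod_ite_lt (p : ι → unitInterval) (a b : ι → ℝ) :
    ∫ u : ι → unitInterval, ∏ e, (if u e < p e then a e else b e) =
      ∏ e, (p e * a e + (1 - p e) * b e) := by
  rw [integral_fintype_prod_volume_eq_prod fun e x => if x < p e then a e else b e]
  exact prod_congr rfl fun e _ => integral_ite_lt _ _ _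

theorem ite_forall_lt_pow_eq_prod [DecidableEq ι] {E F : Finset ι}
    (hEF : Disjoint E F) (p q : unitInterval) (z : ℝ) (u : ι → unitInterval) :
    (if ∀ e ∈ E, u e < q then z ^ #{e ∈ F | u e < p} else 0) =
      ∏ e, if u e < (if e ∈ E then q else p) then (if e ∈ F then z else 1)
        else (if e ∈ E then 0 else 1) := by
  split_ifs with hE
  · rw [← prod_const, ← univ_inter ({e ∈ F | u e < p}), ← prod_ite_mem]
    refine prod_congr rfl fun e _ => ?_
    by_cases heE : e ∈ E
    · simp [heE, hE e heE, disjoint_left.1 hEF heE]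
    · by_cases heF : e ∈ F <;> simp [heE, heF]
  · push Not at hE
    obtain ⟨e, he, hqe⟩ := hE
    exact (prod_eq_zero (mem_univ e) (by simp [he, not_lt.2 hqe])).symm

theorem integrable_ite_forall_lt_pow [DecidableEq ι] {E F : Finset ι}
    (hEF : Disjoint E F) (p q : unitInterval) (z : ℝ) :
    Integrable fun u : ι → unitInterval =>
      if ∀ e ∈ E, u e < q then z ^ #{e ∈ F | u e < p} else 0 := by
  simp only [ite_forall_lt_pow_eq_prod hEF]
  exact integrable_prod_ite_lt (fun e => if e ∈ E then q else p) (fun e => if e ∈ F then z else 1)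
    fun e => if e ∈ E then 0 else 1

theorem integral_ite_forall_lt_pow [DecidableEq ι] {E F : Finset ι}
    (hEF : Disjoint E F) (p q : unitInterval) (z : ℝ) :
    ∫ u : ι → unitInterval, (if ∀ e ∈ E, u e < q then z ^ #{e ∈ F | u e < p} else 0) =
      q ^ #E * (1 - p * (1 - z)) ^ #F := by
  simp only [ite_forall_lt_pow_eq_prod hEF]
  rw [integral_prod_ite_lt (fun e => if e ∈ E then q else p) (fun e => if e ∈ F then z else 1)
    fun e => if e ∈ E then 0 else 1]
  have hfactor (e : ι) :
      ((if e ∈ E then q else p : unitInterval) * (if e ∈ F then z else 1) +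
        (1 - (if e ∈ E then q else p : unitInterval)) * (if e ∈ E then 0 else 1) : ℝ) =
      (if e ∈ E then (q : ℝ) else 1) * if e ∈ F then 1 - p * (1 - z) else 1 := by
    by_cases heE : e ∈ E
    · simp [heE, disjoint_left.1 hEF heE]
    · by_cases heF : e ∈ F
      · simp only [heE, heF, if_true, if_false]; ring
      · simp [heE, heF]
  simp only [hfactor, prod_mul_distrib, prod_ite_mem, univ_inter, prod_const]

theorem measureReal_forall_lt_and_card_le_le {E F : Finset ι} (hEF : Disjoint E F)
    (p q : unitInterval) {z : ℝ} (hz₀ : 0 < z) (hz₁ : z ≤ 1) (k : ℕ) :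
    volume.real {u : ι → unitInterval | (∀ e ∈ E, u e < q) ∧ #{e ∈ F | u e < p} ≤ k} ≤
      q ^ #E * z⁻¹ ^ k * Real.exp (-(p * (1 - z) * #F)) := by
  classical
  have hp := p.2
  have hq := q.2
  have hmarkov : volume.real {u : ι → unitInterval | (∀ e ∈ E, u e < q) ∧ #{e ∈ F | u e < p} ≤ k} ≤
      (z ^ k)⁻¹ * (q ^ #E * (1 - p * (1 - z)) ^ #F) := by
    rw [← integral_ite_forall_lt_pow hEF]
    refine measureReal_le_inv_mul_integral (fun u => ?_) (integrable_ite_forall_lt_pow hEF p q z)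
      (by positivity) ?_
    · simp only [Pi.zero_apply]; positivity
    · rintro u ⟨hE, hF⟩
      rw [if_pos hE]
      exact pow_le_pow_of_le_one hz₀.le hz₁ hF
  have hexp : (1 - p * (1 - z)) ^ #F ≤ Real.exp (-(p * (1 - z) * #F)) := by
    have h := Real.one_sub_le_exp_neg (p * (1 - z))
    calc (1 - p * (1 - z)) ^ #F ≤ Real.exp (-(p * (1 - z))) ^ #F :=
          pow_le_pow_left₀ (by nlinarith [hp.1, hp.2]) h _
      _ = _ := by rw [← Real.exp_nat_mul]; ring_nf
  calc _ ≤ (z ^ k)⁻¹ * (q ^ #E * Real.exp (-(p * (1 - z) * #F))) :=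
        hmarkov.trans (by have := hq.1; gcongr)
    _ = _ := by rw [inv_pow]; ring

theorem measureReal_card_le_le (F : Finset ι) (p : unitInterval) {z : ℝ} (hz₀ : 0 < z) (hz₁ : z ≤ 1)
    (k : ℕ) :
    volume.real {u : ι → unitInterval | #{e ∈ F | u e < p} ≤ k} ≤
      z⁻¹ ^ k * Real.exp (-(p * (1 - z) * #F)) := by
  simpa using measureReal_forall_lt_and_card_le_le (disjoint_empty_left F) p 1 hz₀ hz₁ k

theorem measureReal_le_card_le (F : Finset ι) (p : unitInterval) {z : ℝ} (hz : 1 ≤ z) (k : ℕ) :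
    volume.real {u : ι → unitInterval | k ≤ #{e ∈ F | u e < p}} ≤
      z⁻¹ ^ k * Real.exp (p * z * #F) := by
  classical
  have hp := p.2
  have hz₀ : 0 < z := by linarith
  have hmarkov : volume.real {u : ι → unitInterval | k ≤ #{e ∈ F | u e < p}} ≤
      (z ^ k)⁻¹ * (1 - p * (1 - z)) ^ #F := by
    have hint := integral_ite_forall_lt_pow (disjoint_empty_left F) p 1 z
    have hintegrable := integrable_ite_forall_lt_pow (disjoint_empty_left F) p 1 z
    simp only [notMem_empty, false_imp_iff, implies_true, if_true, card_empty, pow_zero,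
      one_mul] at hint hintegrable
    rw [← hint]
    refine measureReal_le_inv_mul_integral (fun u => ?_) hintegrable (by positivity) ?_
    · simp only [Pi.zero_apply]; positivity
    · exact fun u hu => pow_le_pow_right₀ hz hu
  have hexp : (1 - p * (1 - z)) ^ #F ≤ Real.exp (p * z * #F) := by
    have h := Real.add_one_le_exp (p * z)
    calc (1 - p * (1 - z)) ^ #F ≤ Real.exp (p * z) ^ #F :=
          pow_le_pow_left₀ (by nlinarith [hp.1]) (by nlinarith [hp.1]) _
      _ = _ := by rw [← Real.exp_nat_mul]; ring_nf
  rw [inv_pow]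
  exact hmarkov.trans (by gcongr)

theorem measureReal_forall_le (F : Finset ι) (p : unitInterval) :
    volume.real {u : ι → unitInterval | ∀ e ∈ F, p ≤ u e} = (1 - p) ^ #F := by
  classical
  have hpi : {u : ι → unitInterval | ∀ e ∈ F, p ≤ u e} =
      Set.univ.pi fun e => if e ∈ F then Set.Ici p else Set.univ := by
    ext u
    simp only [Set.mem_ofPred_eq, Set.mem_univ_pi]
    refine forall_congr' fun e => ?_
    split_ifs with he <;> simp [he]
  have hfactor (e : ι) : (volume (if e ∈ F then Set.Ici p else Set.univ)).toReal =
      if e ∈ F then (1 - p : ℝ) else 1 := by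
    split_ifs <;> simp [p.2.2]
  rw [hpi, Measure.real, volume_pi_pi, ENNReal.toReal_prod]
  simp only [hfactor, prod_ite_mem, univ_inter, prod_const]

theorem sum_sum_measureReal_forall_le_le [DecidableEq ι] {κ : Type*} [Fintype κ]
    {F : κ → Finset ι} {m : ℕ} (hm : 0 < m) (hF : ∀ i, #(F i) = m)
    (hF₂ : ∀ i j, i ≠ j → 2 * m - 1 ≤ #(F i ∪ F j)) {p : unitInterval} (hp : p < 1) :
    ∑ i, ∑ j, volume.real {u : ι → unitInterval | ∀ e ∈ F i ∪ F j, p ≤ u e} ≤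
      Fintype.card κ * (1 - p) ^ m + (Fintype.card κ * (1 - p : ℝ) ^ m) ^ 2 / (1 - p) := by
  classical
  have hq₀ : (0 : ℝ) < 1 - p := sub_pos.2 hp
  have hq₁ : (1 - p : ℝ) ≤ 1 := by linarith [p.2.1]
  have hterm (i j : κ) : volume.real {u : ι → unitInterval | ∀ e ∈ F i ∪ F j, p ≤ u e} ≤
      (if i = j then (1 - p : ℝ) ^ m else 0) + (1 - p) ^ (2 * m - 1) := by
    rw [measureReal_forall_le]
    split_ifs with hij
    · rw [hij, union_self, hF]
      exact le_add_of_nonneg_right (by positivity)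
    · rw [zero_add]
      exact pow_le_pow_of_le_one hq₀.le hq₁ (hF₂ i j hij)
  have hpow : (1 - p : ℝ) ^ (2 * m - 1) = (1 - p) ^ m * (1 - p) ^ m / (1 - p) := by
    rw [eq_div_iff hq₀.ne', ← pow_succ, ← pow_add]
    congr 1
    lia
  calc _ ≤ ∑ i : κ, ∑ j : κ, ((if i = j then (1 - p : ℝ) ^ m else 0) + (1 - p) ^ (2 * m - 1)) :=
        sum_le_sum fun i _ => sum_le_sum fun j _ => hterm i j
    _ = _ := by
      simp only [sum_add_distrib, sum_ite_eq, mem_univ, if_true, sum_const, card_univ,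
        nsmul_eq_mul, hpow]
      ring

theorem measureReal_forall_exists_lt_le [DecidableEq ι] {κ : Type*} [Fintype κ] [Nonempty κ]
    {F : κ → Finset ι} {m : ℕ} (hm : 0 < m) (hF : ∀ i, #(F i) = m)
    (hF₂ : ∀ i j, i ≠ j → 2 * m - 1 ≤ #(F i ∪ F j)) {p : unitInterval} (hp : p < 1) :
    volume.real {u : ι → unitInterval | ∀ i, ∃ e ∈ F i, u e < p} ≤
      1 / (Fintype.card κ * (1 - p) ^ m) + p / (1 - p) := by
  let A (i : κ) : Set (ι → unitInterval) := {u | ∀ e ∈ F i, p ≤ u e}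
  have hA (i : κ) : MeasurableSet (A i) := by
    have hInter : A i = ⋂ e ∈ F i, {u | p ≤ u e} := by ext; simp [A]
    rw [hInter]
    exact Finset.measurableSet_biInter _ fun e _ =>
      measurableSet_le measurable_const (measurable_pi_apply e)
  have hAA (i j : κ) : A i ∩ A j = {u | ∀ e ∈ F i ∪ F j, p ≤ u e} := by
    ext u
    simp only [A, Set.mem_inter_iff, Set.mem_ofPred_eq, mem_union, or_imp, forall_and]
  have hcompl : {u : ι → unitInterval | ∀ i, ∃ e ∈ F i, u e < p} = ⋂ i, (A i)ᶜ := by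
    ext u
    simp [A]
  have hq₀ : (0 : ℝ) < 1 - p := sub_pos.2 hp
  set M : ℝ := Fintype.card κ * (1 - p) ^ m
  have hM : 0 < M := mul_pos (Nat.cast_pos.2 Fintype.card_pos) (pow_pos hq₀ m)
  have hsum : ∑ i, volume.real (A i) = M := by
    simp only [A, measureReal_forall_le, hF, sum_const, card_univ, nsmul_eq_mul, M]
  have hsecond := measureReal_iInter_compl_le hA (hsum ▸ hM)
  simp only [hsum, hAA] at hsecond
  rw [hcompl]
  calc _ ≤ (M + M ^ 2 / (1 - p)) / M ^ 2 - 1 :=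
        hsecond.trans (by gcongr; exact sum_sum_measureReal_forall_le_le hm hF hF₂ hp)
    _ = _ := by field_simp; ring

end UniformLabels

/-! ### The order of the labels -/

section LabelOrder

variable {ι : Type*} {N : ℕ}

/-- The labellings of `ι` whose increasing order of labels is the enumeration `σ`. -/
def sortedBy (σ : Fin N ≃ ι) : Set (ι → unitInterval) := {u | StrictMono (u ∘ σ)}

theorem exists_mem_sortedBy [Nonempty (Fin N ≃ ι)] {u : ι → unitInterval}
    (hu : Function.Injective u) :
    ∃ σ : Fin N ≃ ι, u ∈ sortedBy σ := by
  obtain ⟨σ⟩ := ‹Nonempty (Fin N ≃ ι)›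
  refine ⟨(Tuple.sort (u ∘ σ)).trans σ, ?_⟩
  exact (Tuple.monotone_sort (u ∘ σ)).strictMono_of_injective
    ((hu.comp σ.injective).comp (Equiv.injective _))

theorem pairwise_disjoint_sortedBy :
    Pairwise (Function.onFun Disjoint fun σ : Fin N ≃ ι => sortedBy σ) := by
  refine fun σ τ hne => Set.disjoint_left.2 fun u (hσ : StrictMono (u ∘ σ)) hτ => hne ?_
  have hu : Function.Injective u := by
    simpa [Function.comp_assoc] using hσ.injective.comp σ.symm.injective
  have hrange : Set.range (u ∘ σ) = Set.range (u ∘ τ) := by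
    rw [σ.surjective.range_comp, τ.surjective.range_comp]
  exact Equiv.ext fun i => hu (congrFun ((hσ.range_inj hτ).1 hrange) i)

theorem preimage_comp_sortedBy (σ τ : Fin N ≃ ι) :
    (fun u : ι → unitInterval => u ∘ σ.symm.trans τ) ⁻¹' sortedBy σ = sortedBy τ := by
  ext u
  have hcomp : (u ∘ σ.symm.trans τ) ∘ σ = u ∘ τ := by funext i; simp
  simp only [sortedBy, Set.mem_preimage, Set.mem_ofPred_eq, hcomp]

theorem measurableSet_sortedBy (σ : Fin N ≃ ι) : MeasurableSet (sortedBy σ) := by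
  have hInter : sortedBy σ = ⋂ (a) (b) (_ : a < b), {u | u (σ a) < u (σ b)} := by
    ext u
    simp [sortedBy, StrictMono]
  rw [hInter]
  exact .iInter fun a => .iInter fun b => .iInter fun _ =>
    measurableSet_lt (measurable_pi_apply _) (measurable_pi_apply _)

variable [Fintype ι]

theorem volume_preimage_comp_equiv (ρ : ι ≃ ι) (B : Set (ι → unitInterval)) :
    volume ((fun u : ι → unitInterval => u ∘ ρ) ⁻¹' B) = volume B := by
  have hpre := (volume_measurePreserving_piCongrLeft
    (fun _ : ι => unitInterval) ρ.symm).measure_preimage_equiv B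
  have hcongr : ⇑(MeasurableEquiv.piCongrLeft (fun _ : ι => unitInterval) ρ.symm) =
      fun u => u ∘ ρ := by
    funext u i
    simpa [MeasurableEquiv.piCongrLeft] using
      Equiv.piCongrLeft_apply_apply (fun _ : ι => unitInterval) ρ.symm u (ρ i)
  rwa [hcongr] at hpre

theorem volume_setOf_apply_eq {e f : ι} (h : e ≠ f) :
    volume {u : ι → unitInterval | u e = u f} = 0 := by
  have hindep : ProbabilityTheory.IndepFun (fun u : ι → unitInterval => u e) (fun u => u f) :=
    (ProbabilityTheory.iIndepFun_pi (μ := fun _ : ι => (volume : Measure unitInterval))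
      (X := fun _ => id) fun _ => aemeasurable_id).indepFun h
  have heval (e : ι) : (volume : Measure (ι → unitInterval)).map (fun u => u e) = volume :=
    (measurePreserving_eval (fun _ : ι => (volume : Measure unitInterval)) e).map_eq
  have hmap : (volume : Measure (ι → unitInterval)).map (fun u => (u e, u f)) =
      volume.prod volume := by
    rw [hindep.map_prod_eq_prod_map_map (measurable_pi_apply e).aemeasurable
        (measurable_pi_apply f).aemeasurable,
      heval, heval]
  have hdiagonal : (volume.prod volume : Measure (unitInterval × unitInterval))
      (Set.diagonal unitInterval) = 0 := by
    rw [Measure.measure_prod_null measurableSet_diagonal]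
    refine Filter.Eventually.of_forall fun x => ?_
    have : Prod.mk x ⁻¹' Set.diagonal unitInterval = {x} := by ext; simp [eq_comm]
    simp [this]
  rw [← hmap, Measure.map_apply (by fun_prop) measurableSet_diagonal] at hdiagonal
  exact hdiagonal

theorem ae_injective : ∀ᵐ u : ι → unitInterval, Function.Injective u := by
  have hne : ∀ᵐ u : ι → unitInterval, ∀ e f, e ≠ f → u e ≠ u f :=
    ae_all_iff.2 fun e => ae_all_iff.2 fun f => ae_all_iff.2 fun h => by
      simpa [ae_iff] using volume_setOf_apply_eq h
  filter_upwards [hne] with u hu e f huef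
  exact not_imp_not.1 (hu e f) huef

variable [Fintype (Fin N ≃ ι)] [Nonempty (Fin N ≃ ι)]

theorem volume_sortedBy (σ : Fin N ≃ ι) :
    volume (sortedBy σ) = (Fintype.card (Fin N ≃ ι) : ENNReal)⁻¹ := by
  have htotal : volume (⋃ τ : Fin N ≃ ι, sortedBy τ) = 1 := by
    rw [prob_compl_eq_zero_iff (.iUnion measurableSet_sortedBy) |>.symm]
    exact ae_iff.1 (ae_injective.mono fun u hu => Set.mem_iUnion.2 (exists_mem_sortedBy hu))
  have hequal (τ : Fin N ≃ ι) : volume (sortedBy τ) = volume (sortedBy σ) := by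
    rw [← preimage_comp_sortedBy σ τ, volume_preimage_comp_equiv]
  rw [measure_iUnion pairwise_disjoint_sortedBy measurableSet_sortedBy, tsum_fintype] at htotal
  simp only [hequal, sum_const, nsmul_eq_mul, card_univ] at htotal
  exact ENNReal.eq_inv_of_mul_eq_one_left (by rw [mul_comm, htotal])

theorem uniform_le_volume [MeasurableSpace (Fin N ≃ ι)] {Q : Set (Fin N ≃ ι)}
    (hQ : MeasurableSet Q) {B : Set (ι → unitInterval)} (h : ∀ σ ∈ Q, sortedBy σ ⊆ B) :
    (PMF.uniformOfFintype (Fin N ≃ ι)).toMeasure Q ≤ volume B := by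
  classical
  rw [PMF.toMeasure_uniformOfFintype_apply Q hQ]
  calc (Fintype.card Q / Fintype.card (Fin N ≃ ι) : ENNReal)
      = ∑ σ : Q, volume (sortedBy σ.1) := by
        simp [volume_sortedBy, ENNReal.div_eq_inv_mul, mul_comm]
    _ = volume (⋃ σ : Q, sortedBy σ.1) := by
        rw [measure_iUnion (pairwise_disjoint_sortedBy.comp_of_injective Subtype.val_injective)
          fun σ => measurableSet_sortedBy σ.1, tsum_fintype]
    _ ≤ volume B := measure_mono (Set.iUnion_subset fun σ => h σ σ.2)

end LabelOrder

/-! ### Reconstruction from a typical graph -/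

section Reconstruction

variable {V : Type*} {x w : V → ℝ} {H : SimpleGraph V}

/-- The placements `w` and `x` of the vertices on the line give every edge of `H` the same
length. -/
def EqOnEdgeLengths (H : SimpleGraph V) (w x : V → ℝ) : Prop :=
  ∀ i j, H.Adj i j → |w i - w j| = |x i - x j|

/-- The edge lengths of `H` determine all distances between the points of `x`: the case `U = univ`
of `Reconstructible`, for a simple graph on any vertex type. -/
def IsReconstructible (x : V → ℝ) (H : SimpleGraph V) : Prop :=
  ∀ w : V → ℝ, Function.Injective w → EqOnEdgeLengths H w x → ∀ i j, |w i - w j| = |x i - x j|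

/-- The stopping condition of the process: no vertex is isolated, and reflecting a leaf in its
neighbour hits another point. A leaf is expressed as a vertex with a unique neighbour. -/
def IsSecured (x : V → ℝ) (H : SimpleGraph V) : Prop :=
  (∀ i, ∃ j, H.Adj i j) ∧
    ∀ i j, H.Adj i j → (∀ k, H.Adj i k → k = j) → ∃ ℓ, x ℓ = 2 * x j - x i

theorem EqOnEdgeLengths.sub_eq_or_add_eq (hwx : EqOnEdgeLengths H w x) {i j : V}
    (hij : H.Adj i j) : w i - x i = w j - x j ∨ w i + x i = w j + x j := by
  rcases abs_eq_abs.1 (hwx i j hij) with h | h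
  · exact Or.inl (by linarith)
  · exact Or.inr (by linarith)

theorem EqOnEdgeLengths.neg (hwx : EqOnEdgeLengths H w x) : EqOnEdgeLengths H (-w) x := by
  intro i j hij
  rw [← hwx i j hij, Pi.neg_apply, Pi.neg_apply, ← neg_sub', abs_neg]

theorem not_isReconstructible_of_move (hx : Function.Injective x) {i k : V} {y : ℝ}
    (hy : ∀ j, x j ≠ y) (hadj : ∀ j, H.Adj i j → |y - x j| = |x i - x j|) (hki : k ≠ i)
    (hk : |y - x k| ≠ |x i - x k|) : ¬ IsReconstructible x H := by
  classical
  intro hrec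
  have hinj : Function.Injective (Function.update x i y) := by
    intro a b hab
    by_cases ha : a = i <;> by_cases hb : b = i
    · rw [ha, hb]
    · exact absurd (by simpa [ha, hb] using hab.symm) (hy b)
    · exact absurd (by simpa [ha, hb] using hab) (hy a)
    · exact hx (by simpa [ha, hb] using hab)
  have hlengths : EqOnEdgeLengths H (Function.update x i y) x := by
    intro a b hab
    by_cases ha : a = i
    · subst ha
      simpa [hab.ne'] using hadj b hab
    · by_cases hb : b = i
      · subst hb
        simpa [ha, abs_sub_comm] using hadj a hab.symm
      · simp [ha, hb]
  exact hk (by simpa [hki] using hrec _ hinj hlengths i k)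

theorem not_isReconstructible_of_isolated [Finite V] [Nontrivial V] (hx : Function.Injective x)
    {i : V} (hi : ∀ j, ¬ H.Adj i j) : ¬ IsReconstructible x H := by
  obtain ⟨k, hk⟩ := exists_ne i
  obtain ⟨y, hy⟩ :=
    ((Set.finite_range x).union (Set.finite_singleton (2 * x k - x i))).exists_notMem
  simp only [Set.mem_union, Set.mem_range, Set.mem_singleton_iff, not_or, not_exists] at hy
  refine not_isReconstructible_of_move hx hy.1 (fun j hj => absurd hj (hi j)) hk fun habs => ?_
  rcases abs_eq_abs.1 habs with h | h
  · exact hy.1 i (by linarith)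
  · exact hy.2 (by linarith)

theorem not_isReconstructible_of_insecure_leaf (hx : Function.Injective x) {i j k : V}
    (hij : H.Adj i j) (hleaf : ∀ a, H.Adj i a → a = j) (hinsecure : ∀ ℓ, x ℓ ≠ 2 * x j - x i)
    (hki : k ≠ i) (hkj : k ≠ j) : ¬ IsReconstructible x H := by
  refine not_isReconstructible_of_move hx hinsecure (fun a ha => ?_) hki fun habs => ?_
  · rw [hleaf a ha, abs_sub_comm]
    ring_nf
  · rcases abs_eq_abs.1 habs with h | h
    · exact hij.ne (hx (by linarith))
    · exact hkj (hx (by linarith))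

theorem IsReconstructible.isSecured [Fintype V] (hV : 2 < Fintype.card V)
    (hx : Function.Injective x) (hrec : IsReconstructible x H) : IsSecured x H := by
  classical
  have : Nontrivial V := Fintype.one_lt_card_iff_nontrivial.1 (by lia)
  constructor
  · intro i
    by_contra! hi
    exact not_isReconstructible_of_isolated hx hi hrec
  · intro i j hij hleaf
    by_contra! hinsecure
    have hcard : 1 < #(univ.erase i) := by
      rw [card_erase_of_mem (mem_univ i), card_univ]
      lia
    obtain ⟨k, hk, hkj⟩ := exists_mem_ne hcard j
    exact not_isReconstructible_of_insecure_leaf hx hij hleaf hinsecure (ne_of_mem_erase hk) hkj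
      hrec

end Reconstruction

section LargeFiber

theorem exists_le_card_filter_mem_le {V W : Type*} [DecidableEq W] {A : Finset V} {f : V → W}
    {h m : ℕ} (hm : ∀ c, #{i ∈ A | f i = c} ≤ m) (hA : h ≤ #A) :
    ∃ T : Finset W, h ≤ #{i ∈ A | f i ∈ T} ∧ #{i ∈ A | f i ∈ T} ≤ h + m := by
  classical
  induction h with
  | zero => exact ⟨∅, by simp⟩
  | succ h ih =>
    obtain ⟨T, hlower, hupper⟩ := ih (by lia)
    by_cases hT : h + 1 ≤ #{i ∈ A | f i ∈ T}
    · exact ⟨T, hT, by lia⟩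
    · obtain ⟨a, haA, haT⟩ : ∃ a ∈ A, f a ∉ T := by
        by_contra! hall
        rw [filter_true_of_mem hall] at hT
        exact hT hA
      have hinsert : #{i ∈ A | f i ∈ insert (f a) T} =
          #{i ∈ A | f i = f a} + #{i ∈ A | f i ∈ T} := by
        simp only [mem_insert, filter_or]
        exact card_union_of_disjoint (disjoint_filter.2 fun i _ hi hiT => haT (hi ▸ hiT))
      have hpos : 0 < #{i ∈ A | f i = f a} := card_pos.2 ⟨a, by simp [haA]⟩
      have hle := hm (f a)
      exact ⟨insert (f a) T, by lia, by lia⟩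

theorem exists_large_fiber {V W W' : Type*} [Fintype V] [DecidableEq W] [DecidableEq W']
    {G : SimpleGraph V} (hV : 100 ≤ Fintype.card V)
    (hG : ∀ A B : Finset V, Disjoint A B → Fintype.card V ≤ 10 * #A → Fintype.card V ≤ 10 * #B →
      ∃ a ∈ A, ∃ b ∈ B, G.Adj a b)
    {f : V → W} {g : V → W'} (hfg : ∀ i j, G.Adj i j → f i = f j ∨ g i = g j) :
    (∃ c, Fintype.card V ≤ 10 * #{i | f i = c}) ∨ ∃ c, Fintype.card V ≤ 10 * #{i | g i = c} := by
  by_contra! hsmall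
  obtain ⟨hf, hg⟩ := hsmall
  obtain ⟨T, hTlower, hTupper⟩ := exists_le_card_filter_mem_le (A := univ) (f := f)
    (h := (Fintype.card V + 2) / 3) (m := Fintype.card V / 10) (fun c => by have := hf c; lia)
    (by rw [card_univ]; lia)
  obtain ⟨U, hUlower, hUupper⟩ := exists_le_card_filter_mem_le (A := {i | f i ∈ T}) (f := g)
    (h := (Fintype.card V + 9) / 10) (m := Fintype.card V / 10)
    (fun c => by
      have := hg c
      have := card_le_card (filter_subset_filter (fun i => g i = c) (subset_univ {i | f i ∈ T}))
      lia)
    (by lia)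
  have hsplit : #{i | f i ∈ T} + #{i | f i ∉ T} = Fintype.card V :=
    card_filter_add_card_filter_not _
  have hsplit_mem := card_filter_add_card_filter_not (s := {i | f i ∈ T}) fun i => g i ∈ U
  have hsplit_notMem := card_filter_add_card_filter_not (s := {i | f i ∉ T}) fun i => g i ∈ U
  have hno_edge (A B : Finset V) (hAB : ∀ a ∈ A, ∀ b ∈ B, f a ≠ f b ∧ g a ≠ g b)
      (hA : Fintype.card V ≤ 10 * #A) : 10 * #B < Fintype.card V := by
    by_contra! hB
    obtain ⟨a, ha, b, hb, hab⟩ := hG A B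
      (disjoint_left.2 fun i hiA hiB => (hAB i hiA i hiB).1 rfl) hA hB
    exact (hfg a b hab).elim (hAB a ha b hb).1 (hAB a ha b hb).2
  have hopposite := hno_edge {i ∈ {i | f i ∈ T} | g i ∉ U} {i ∈ {i | f i ∉ T} | g i ∈ U}
    (by simp only [mem_filter, mem_univ, true_and]; grind) (by lia)
  have hopposite' := hno_edge {i ∈ {i | f i ∈ T} | g i ∈ U} {i ∈ {i | f i ∉ T} | g i ∉ U}
    (by simp only [mem_filter, mem_univ, true_and]; grind) (by lia)
  lia

end LargeFiber

section Typical

variable {V : Type*} [Fintype V]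

/-- A vertex of degree less than ten, so that whp no two of them are close to each other. -/
abbrev IsLight (G : SimpleGraph V) [DecidableRel G.Adj] (i : V) : Prop := G.degree i < 10

theorem neighborFinset_subset_of_le {G G' : SimpleGraph V} [DecidableRel G.Adj]
    [DecidableRel G'.Adj] (h : G ≤ G') (v : V) : G.neighborFinset v ⊆ G'.neighborFinset v := by
  intro a ha
  rw [SimpleGraph.mem_neighborFinset] at ha ⊢
  exact h ha

variable [DecidableEq V]

theorem card_interedges_eq_sum (G : SimpleGraph V) [DecidableRel G.Adj] (A B : Finset V) :
    #(G.interedges A B) = ∑ a ∈ A, #(G.neighborFinset a ∩ B) := by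
  rw [SimpleGraph.interedges, Rel.interedges_eq_biUnion, card_biUnion]
  · refine sum_congr rfl fun a _ => ?_
    rw [card_map]
    congr 1
    ext b
    simp [and_comm]
  · intro a _ a' _ hne
    simp only [Function.onFun, disjoint_left, Finset.mem_map]
    rintro _ ⟨b, _, rfl⟩ ⟨b', _, hbb'⟩
    exact hne (congrArg Prod.fst hbb').symm

/-- The properties of the random graphs `G₀ ≤ G₁` sandwiching the graph at the hitting time that
force the latter to determine all distances. -/
structure IsTypical (x : V → ℝ) (G₀ G₁ : SimpleGraph V) [DecidableRel G₀.Adj]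
    [DecidableRel G₁.Adj] : Prop where
  exists_isolated : ∃ i, ∀ j, ¬ G₀.Adj i j
  two_le_degree : ∀ i, 2 ≤ G₁.degree i
  not_adj_of_light : ∀ i j, IsLight G₀ i → IsLight G₀ j → ¬ G₁.Adj i j
  not_common_adj_of_light : ∀ i j k, i ≠ j → IsLight G₀ i → IsLight G₀ j →
    ¬ (G₁.Adj i k ∧ G₁.Adj j k)
  not_adj_of_light_reflection : ∀ i j k, i ≠ k → x k = 2 * x j - x i → IsLight G₀ i →
    IsLight G₀ k → ¬ G₁.Adj i j
  card_interedges_lt : ∀ S : Finset V, S.Nonempty → #S ^ 3 ≤ Fintype.card V →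
    #(G₁.interedges S S) < 8 * #S
  lt_card_interedges_compl : ∀ S : Finset V, Fintype.card V < #S ^ 3 →
    10 * #S ≤ Fintype.card V → #S < #(G₀.interedges S Sᶜ)
  lt_card_interedges : ∀ A B : Finset V, Disjoint A B → Fintype.card V ≤ 10 * #A →
    Fintype.card V ≤ 10 * #B → Fintype.card V < #(G₀.interedges A B)

namespace IsTypical

variable {x : V → ℝ} {G₀ G₁ H : SimpleGraph V} [DecidableRel G₀.Adj] [DecidableRel G₁.Adj]
  {S : Finset V}

theorem card_pow_three_le [DecidableRel H.Adj] (h : IsTypical x G₀ G₁) (h₀ : G₀ ≤ H)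
    (hS : ∀ v ∈ S, #(H.neighborFinset v ∩ Sᶜ) ≤ 1) (hcompl : Fintype.card V ≤ 10 * #Sᶜ) :
    #S ^ 3 ≤ Fintype.card V := by
  have hinteredges : #(G₀.interedges S Sᶜ) ≤ #S :=
    calc #(G₀.interedges S Sᶜ) ≤ ∑ v ∈ S, #(H.neighborFinset v ∩ Sᶜ) := by
          rw [card_interedges_eq_sum]
          gcongr with v
          exact neighborFinset_subset_of_le h₀ v
      _ ≤ #S := by simpa using sum_le_card_nsmul S _ 1 hS
  have hSV : #S ≤ Fintype.card V := card_le_univ S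
  have hsmall : 10 * #S < Fintype.card V := by
    by_contra! hlarge
    have := h.lt_card_interedges S Sᶜ disjoint_compl_right hlarge hcompl
    lia
  by_contra! hcube
  have := h.lt_card_interedges_compl S hcube hsmall.le
  lia

theorem card_light_neighbors_le_one [DecidableRel H.Adj] (h : IsTypical x G₀ G₁) (h₁ : H ≤ G₁)
    (v : V) :
    #{a ∈ H.neighborFinset v | IsLight G₀ a} ≤ 1 := by
  refine card_le_one.2 fun a ha b hb => ?_
  simp only [mem_filter, SimpleGraph.mem_neighborFinset] at ha hb
  by_contra hab
  exact h.not_common_adj_of_light a b v hab ha.2 hb.2 ⟨h₁ ha.1.symm, h₁ hb.1.symm⟩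

theorem light_of_mem [DecidableRel H.Adj] (h : IsTypical x G₀ G₁) (h₀ : G₀ ≤ H) (h₁ : H ≤ G₁)
    (hS : ∀ v ∈ S, #(H.neighborFinset v ∩ Sᶜ) ≤ 1) (hcard : #S ^ 3 ≤ Fintype.card V) {v : V}
    (hv : v ∈ S) : IsLight G₀ v := by
  by_contra hvheavy
  set D : Finset V := {a ∈ S | ¬ IsLight G₀ a} with hD
  have hsparse : #(G₁.interedges D D) < 8 * #D :=
    h.card_interedges_lt D ⟨v, mem_filter.2 ⟨hv, hvheavy⟩⟩
      ((Nat.pow_le_pow_left (card_le_card (filter_subset _ _)) 3).trans hcard)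
  have hdegree (a : V) (ha : a ∈ D) : 8 ≤ #(H.neighborFinset a ∩ D) := by
    obtain ⟨haS, haheavy⟩ := mem_filter.1 ha
    have hcover : H.neighborFinset a ⊆ (H.neighborFinset a ∩ Sᶜ) ∪
        ({b ∈ H.neighborFinset a | IsLight G₀ b} ∪ (H.neighborFinset a ∩ D)) := by
      intro b hb
      simp only [hD, mem_union, mem_inter, mem_filter, mem_compl, hb, true_and]
      tauto
    have hcover_card := (card_le_card hcover).trans ((card_union_le _ _).trans
      (Nat.add_le_add_left (card_union_le _ _) _))
    have hmono : G₀.degree a ≤ #(H.neighborFinset a) := SimpleGraph.degree_le_of_le h₀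
    have := h.card_light_neighbors_le_one h₁ a
    have := hS a haS
    lia
  have hdense : 8 * #D ≤ #(G₁.interedges D D) :=
    calc 8 * #D ≤ ∑ a ∈ D, #(H.neighborFinset a ∩ D) := by
          simpa [mul_comm] using card_nsmul_le_sum D _ 8 hdegree
      _ ≤ #(G₁.interedges D D) := by
          rw [card_interedges_eq_sum]
          gcongr with a
          exact neighborFinset_subset_of_le h₁ a
  lia

theorem sub_eq_of_large_fiber (h : IsTypical x G₀ G₁) (h₀ : G₀ ≤ H) (h₁ : H ≤ G₁)
    (hx : Function.Injective x) (hsec : IsSecured x H) {w : V → ℝ} (hw : Function.Injective w)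
    (hwx : EqOnEdgeLengths H w x) {c : ℝ} (hc : Fintype.card V ≤ 10 * #{i | w i - x i = c})
    (i : V) : w i - x i = c := by
  classical
  by_contra hi
  set S : Finset V := {i | w i - x i ≠ c} with hSdef
  have hScompl : Sᶜ = ({i | w i - x i = c} : Finset V) := by ext; simp [hSdef]
  have hmem (j : V) : j ∈ S ↔ w j - x j ≠ c := by simp [hSdef]
  have hreflect (i j : V) (hij : H.Adj i j) (hi : i ∈ S) (hj : j ∉ S) :
      w i + x i = c + 2 * x j := by
    rw [hmem, not_not] at hj
    have := (hwx.sub_eq_or_add_eq hij).resolve_left (by rw [hj]; exact (hmem i).1 hi)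
    linarith
  have hone (v : V) (hv : v ∈ S) : #(H.neighborFinset v ∩ Sᶜ) ≤ 1 := by
    refine card_le_one.2 fun a ha b hb => hx ?_
    simp only [mem_inter, SimpleGraph.mem_neighborFinset, mem_compl] at ha hb
    linarith [hreflect v a ha.1 hv ha.2, hreflect v b hb.1 hv hb.2]
  have hlight (v : V) (hv : v ∈ S) : IsLight G₀ v :=
    h.light_of_mem h₀ h₁ hone (h.card_pow_three_le h₀ hone (by rwa [hScompl])) hv
  have hneighbor (j : V) (hij : H.Adj i j) : j ∉ S := fun hj =>
    h.not_adj_of_light i j (hlight i ((hmem i).2 hi)) (hlight j hj) (h₁ hij)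
  obtain ⟨v, hiv⟩ := hsec.1 i
  have hleaf (a : V) (hia : H.Adj i a) : a = v :=
    card_le_one.1 (hone i ((hmem i).2 hi)) a (by simp [hia, hneighbor a hia]) v
      (by simp [hiv, hneighbor v hiv])
  obtain ⟨ℓ, hℓ⟩ := hsec.2 i v hiv hleaf
  have hiℓ : i ≠ ℓ := by
    rintro rfl
    exact hiv.ne (hx (by linarith))
  have hwi := hreflect i v hiv ((hmem i).2 hi) (hneighbor v hiv)
  have hℓS : ℓ ∈ S := (hmem ℓ).2 fun hℓc => hiℓ (hw (by linarith))
  exact h.not_adj_of_light_reflection i v ℓ hiℓ hℓ (hlight i ((hmem i).2 hi)) (hlight ℓ hℓS)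
    (h₁ hiv)

theorem isReconstructible (h : IsTypical x G₀ G₁) (h₀ : G₀ ≤ H) (h₁ : H ≤ G₁)
    (hV : 100 ≤ Fintype.card V) (hx : Function.Injective x) (hsec : IsSecured x H) :
    IsReconstructible x H := by
  intro w hw hwx i j
  have hjoined (A B : Finset V) (hAB : Disjoint A B) (hA : Fintype.card V ≤ 10 * #A)
      (hB : Fintype.card V ≤ 10 * #B) : ∃ a ∈ A, ∃ b ∈ B, H.Adj a b := by
    obtain ⟨⟨a, b⟩, hab⟩ := card_pos.1
      ((Nat.zero_le _).trans_lt (h.lt_card_interedges A B hAB hA hB))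
    rw [SimpleGraph.mk_mem_interedges_iff] at hab
    exact ⟨a, hab.1, b, hab.2.1, h₀ hab.2.2⟩
  rcases exists_large_fiber hV hjoined (fun i j => hwx.sub_eq_or_add_eq) with ⟨c, hc⟩ | ⟨c, hc⟩
  · have htranslate := h.sub_eq_of_large_fiber h₀ h₁ hx hsec hw hwx hc
    congr 1
    linarith [htranslate i, htranslate j]
  · have hneg (i : V) : (-w) i - x i = -c ↔ w i + x i = c := by
      rw [Pi.neg_apply, ← neg_add', neg_inj]
    have hreflect := h.sub_eq_of_large_fiber h₀ h₁ hx hsec (w := -w)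
      (neg_injective.comp hw) hwx.neg (c := -c) (by simpa only [hneg] using hc)
    rw [← abs_neg]
    congr 1
    linarith [(hneg i).1 (hreflect i), (hneg j).1 (hreflect j)]

end IsTypical

end Typical

/-! ### The hitting time -/

section LabelGraph

variable {V α : Type*}

/-- The unordered pairs of distinct elements of `V`: the possible edges of a graph on `V`. -/
abbrev Pair (V : Type*) := {e : Sym2 V // ¬ e.IsDiag}

/-- The unordered pair of two distinct elements. -/
def mkPair {i j : V} (h : i ≠ j) : Pair V := ⟨s(i, j), by simpa using h⟩

/-- The graph of the pairs whose label is less than the threshold `p`. -/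
def labelGraph [LT α] (u : Pair V → α) (p : α) : SimpleGraph V where
  Adj i j := ∃ h : i ≠ j, u (mkPair h) < p
  symm := ⟨fun i j ⟨h, hu⟩ => ⟨h.symm, by rwa [mkPair, Subtype.mk_eq_mk.2 Sym2.eq_swap]⟩⟩
  loopless := ⟨fun _ ⟨h, _⟩ => h rfl⟩

noncomputable instance [LT α] (u : Pair V → α) (p : α) : DecidableRel (labelGraph u p).Adj :=
  Classical.decRel _

theorem mem_edgeSet_labelGraph [LT α] {u : Pair V → α} {p : α} (e : Pair V) :
    e.1 ∈ (labelGraph u p).edgeSet ↔ u e < p := by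
  obtain ⟨e, he⟩ := e
  induction e with
  | _ i j => exact ⟨fun ⟨_, hu⟩ => hu, fun hu => ⟨by simpa using he, hu⟩⟩

theorem labelGraph_mono [Preorder α] (u : Pair V → α) : Monotone (labelGraph u) :=
  fun _ _ hpq _ _ ⟨h, hu⟩ => ⟨h, hu.trans_le hpq⟩

theorem labelGraph_succ_le_of_not_le [Preorder α] {r : Pair V → ℕ} {u : Pair V → α}
    (hru : ∀ e f, r e ≤ r f → u e ≤ u f) {t : ℕ} {p : α}
    (h : ¬ labelGraph u p ≤ labelGraph r t) : labelGraph r (t + 1) ≤ labelGraph u p := by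
  simp only [SimpleGraph.le_iff_adj, not_forall] at h
  obtain ⟨i, j, ⟨hij, hu⟩, hr⟩ := h
  have hrt : t ≤ r (mkPair hij) := not_lt.1 fun hlt => hr ⟨hij, hlt⟩
  exact fun a b ⟨hab, hlt⟩ => ⟨hab, (hru _ _ (by lia)).trans_lt hu⟩

end LabelGraph

section HittingTime

variable {V : Type*} {x : V → ℝ} {N : ℕ}

/-- The graph of the first `t` pairs in the enumeration `σ`: the pairs of rank less than `t`. -/
def processGraph (σ : Fin N ≃ Pair V) (t : ℕ) : SimpleGraph V :=
  labelGraph (fun e => (σ.symm e : ℕ)) t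

theorem le_processGraph_of_le {σ : Fin N ≃ Pair V} {t : ℕ} (ht : N ≤ t) (G : SimpleGraph V) :
    G ≤ processGraph σ t :=
  fun _ _ h => ⟨h.ne, (σ.symm _).2.trans_le ht⟩

theorem le_of_mem_sortedBy {ι : Type*} {σ : Fin N ≃ ι} {u : ι → unitInterval}
    (hu : u ∈ sortedBy σ) (e f : ι) (hef : (σ.symm e : ℕ) ≤ σ.symm f) : u e ≤ u f := by
  simpa using StrictMono.monotone hu (Fin.le_def.2 hef)

theorem isSecured_of_two_le_degree [Fintype V] {G H : SimpleGraph V} [DecidableRel G.Adj]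
    (hG : ∀ i, 2 ≤ G.degree i) (hGH : G ≤ H) : IsSecured x H := by
  constructor
  · intro i
    obtain ⟨j, hj⟩ := (G.degree_pos_iff_exists_adj i).1 (by have := hG i; lia)
    exact ⟨j, hGH hj⟩
  · intro i j _ hunique
    obtain ⟨k, hk, hkj⟩ := exists_mem_ne (hG i) j
    exact absurd (hunique k (hGH ((G.mem_neighborFinset i k).1 hk))) hkj

theorem IsTypical.exists_isLeast_isSecured [Fintype V] [DecidableEq V] {u : Pair V → unitInterval}
    {p₀ p₁ : unitInterval} (h : IsTypical x (labelGraph u p₀) (labelGraph u p₁))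
    (hV : 100 ≤ Fintype.card V) (hx : Function.Injective x) {σ : Fin N ≃ Pair V}
    (hu : u ∈ sortedBy σ) :
    ∃ τ, IsLeast {t | t ≤ N ∧ IsSecured x (processGraph σ t)} τ ∧
      IsReconstructible x (processGraph σ τ) ∧
      ∀ t < τ, ¬ IsReconstructible x (processGraph σ t) := by
  have hrank := le_of_mem_sortedBy hu
  obtain ⟨τ, hτ⟩ : ∃ τ, IsLeast {t | t ≤ N ∧ IsSecured x (processGraph σ t)} τ :=
    ⟨_, isLeast_csInf ⟨N, le_rfl,
      isSecured_of_two_le_degree h.two_le_degree (le_processGraph_of_le le_rfl _)⟩⟩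
  have hmin (t : ℕ) (ht : t < τ) : ¬ IsSecured x (processGraph σ t) :=
    fun hsec => ht.not_ge (hτ.2 ⟨ht.le.trans hτ.1.1, hsec⟩)
  have h₀ : labelGraph u p₀ ≤ processGraph σ τ := by
    by_contra hnot
    have hle : processGraph σ τ ≤ labelGraph u p₀ :=
      (labelGraph_mono _ τ.le_succ).trans (labelGraph_succ_le_of_not_le hrank hnot)
    obtain ⟨i, hi⟩ := h.exists_isolated
    obtain ⟨j, hj⟩ := hτ.1.2.1 i
    exact hi j (hle hj)
  have h₁ : processGraph σ τ ≤ labelGraph u p₁ := by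
    cases τ with
    | zero => exact fun i j ⟨_, hlt⟩ => absurd hlt (Nat.not_lt_zero _)
    | succ t =>
      exact labelGraph_succ_le_of_not_le hrank fun hle =>
        hmin t t.lt_succ_self (isSecured_of_two_le_degree h.two_le_degree hle)
  exact ⟨τ, hτ, h.isReconstructible h₀ h₁ hV hx hτ.1.2,
    fun t ht hrec => hmin t ht (hrec.isSecured (by lia) hx)⟩

end HittingTime

section FinVertices

variable {n : ℕ} {x : Fin n → ℝ}

theorem edgeSet_processGraph (σ : Fin (n.choose 2) ≃ Pair (Fin n)) (t : ℕ) :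
    (processGraph σ t).edgeSet = Gt σ t := by
  ext e
  constructor
  · intro he
    have hlt := (mem_edgeSet_labelGraph ⟨e, SimpleGraph.not_isDiag_of_mem_edgeSet _ he⟩).1 he
    exact ⟨_, hlt, by simp⟩
  · rintro ⟨s, hs, rfl⟩
    exact (mem_edgeSet_labelGraph _).2 (by simpa using hs)

theorem reconstructible_edgeSet_univ_iff {H : SimpleGraph (Fin n)} :
    Reconstructible x H.edgeSet Set.univ ↔ IsReconstructible x H := by
  simp [Reconstructible, IsReconstructible, EqOnEdgeLengths]

theorem degree_edgeSet (H : SimpleGraph (Fin n)) [DecidableRel H.Adj] (i : Fin n) :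
    degree H.edgeSet i = H.degree i := by
  rw [← H.card_incidenceSet_eq_degree, ← Nat.card_eq_fintype_card]
  rfl

theorem isSecured_iff (H : SimpleGraph (Fin n)) :
    IsSecured x H ↔ (∀ u, 1 ≤ degree H.edgeSet u) ∧
      ∀ u v, degree H.edgeSet u = 1 → u ≠ v → s(u, v) ∈ H.edgeSet → Secure x u v := by
  classical
  simp only [IsSecured, degree_edgeSet, Nat.succ_le_iff, H.degree_pos_iff_exists_adj,
    H.degree_eq_one_iff_existsUnique_adj, H.mem_edgeSet, Secure]
  refine and_congr_right fun _ => forall₂_congr fun i j => ⟨fun h hunique hij hadj => ?_,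
    fun h hadj hunique => (h ⟨j, hadj, hunique⟩ hadj.ne hadj).2⟩
  exact ⟨hij, h hadj fun k hk => hunique.unique hk hadj⟩

theorem IsTypical.hitting_time {u : Pair (Fin n) → unitInterval} {p₀ p₁ : unitInterval}
    (h : IsTypical x (labelGraph u p₀) (labelGraph u p₁)) (hn : 100 ≤ n)
    (hx : Function.Injective x) {σ : Fin (n.choose 2) ≃ Pair (Fin n)} (hu : u ∈ sortedBy σ) :
    ∃ τ : ℕ, IsLeast {t : ℕ | t ≤ n.choose 2 ∧ (∀ u : Fin n, 1 ≤ degree (Gt σ t) u) ∧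
        (∀ u v : Fin n, degree (Gt σ t) u = 1 → u ≠ v → s(u, v) ∈ Gt σ t → Secure x u v)} τ ∧
      Reconstructible x (Gt σ τ) Set.univ ∧
      ∀ t : ℕ, t < τ → ¬ Reconstructible x (Gt σ t) Set.univ := by
  simpa only [isSecured_iff, ← reconstructible_edgeSet_univ_iff, edgeSet_processGraph] using
    h.exists_isLeast_isSecured (by simpa using hn) hx hu

end FinVertices

section Counting

theorem injOn_sym2Mk_of_disjoint {V : Type*} {A B : Finset V} (hAB : Disjoint A B) :
    Set.InjOn (fun q : V × V => s(q.1, q.2)) (A ×ˢ B : Finset (V × V)) := by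
  rintro ⟨a, b⟩ hab ⟨c, d⟩ hcd h
  simp only [coe_product, Set.mem_prod, mem_coe] at hab hcd
  rcases Sym2.eq_iff.1 h with ⟨rfl, rfl⟩ | ⟨rfl, rfl⟩
  · rfl
  · exact absurd hcd.2 (disjoint_left.1 hAB hab.1)

variable {V α : Type*} [Fintype V] [DecidableEq V]

/-- The pairs containing the vertex `i`. -/
def star (i : V) : Finset (Pair V) := {e | i ∈ e.1}

/-- The pairs with one element in `A` and the other in `B`. -/
def pairsBetween (A B : Finset V) : Finset (Pair V) := {e | ∃ a ∈ A, ∃ b ∈ B, e.1 = s(a, b)}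

theorem mkPair_mem_star {i j : V} (h : i ≠ j) : mkPair h ∈ star i := by
  simp [star, mkPair]

theorem degree_labelGraph [LT α] [DecidableLT α] (u : Pair V → α) (p : α) (i : V) :
    (labelGraph u p).degree i = #{e ∈ star i | u e < p} := by
  rw [← SimpleGraph.card_incidenceFinset_eq_degree, ← card_map (Function.Embedding.subtype _)]
  congr 1
  ext e
  simp only [star, SimpleGraph.mem_incidenceFinset, SimpleGraph.incidenceSet, filter_filter,
    Finset.mem_map, mem_filter, mem_univ, true_and, Function.Embedding.subtype_apply,
    Set.mem_ofPred_eq]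
  constructor
  · rintro ⟨he, hi⟩
    exact ⟨⟨e, SimpleGraph.not_isDiag_of_mem_edgeSet _ he⟩,
      ⟨hi, (mem_edgeSet_labelGraph _).1 he⟩, rfl⟩
  · rintro ⟨e, ⟨hi, he⟩, rfl⟩
    exact ⟨(mem_edgeSet_labelGraph e).2 he, hi⟩

theorem card_star (i : V) : #(star i) = Fintype.card V - 1 := by
  have hneighbors : (labelGraph (fun _ : Pair V => 0) 1).neighborFinset i = univ.erase i := by
    ext j
    rw [SimpleGraph.mem_neighborFinset, mem_erase, and_iff_left (mem_univ j)]
    exact ⟨fun h => h.ne', fun h => ⟨h.symm, one_pos⟩⟩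
  have hdegree := degree_labelGraph (fun _ : Pair V => 0) 1 i
  rw [filter_true_of_mem (by simp), ← SimpleGraph.card_neighborFinset_eq_degree, hneighbors,
    card_erase_of_mem (mem_univ i), card_univ] at hdegree
  exact hdegree.symm

theorem card_star_union_star {i j : V} (h : i ≠ j) :
    2 * (Fintype.card V - 1) - 1 ≤ #(star i ∪ star j) := by
  have hinter : #(star i ∩ star j) ≤ 1 := by
    refine card_le_one.2 fun e he f hf => Subtype.ext ?_
    simp only [star, mem_inter, mem_filter, mem_univ, true_and] at he hf
    rw [(Sym2.mem_and_mem_iff h).1 he, (Sym2.mem_and_mem_iff h).1 hf]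
  have hunion := card_union_add_card_inter (star i) (star j)
  rw [card_star, card_star] at hunion
  lia

theorem image_interedges_labelGraph [LT α] [DecidableLT α] (u : Pair V → α) (p : α)
    (A B : Finset V) :
    ((labelGraph u p).interedges A B).image (fun q => s(q.1, q.2)) =
      {e ∈ pairsBetween A B | u e < p}.map (Function.Embedding.subtype _) := by
  ext e
  simp only [mem_image, Prod.exists, SimpleGraph.mk_mem_interedges_iff, pairsBetween,
    Finset.mem_map, mem_filter, mem_univ, true_and, Function.Embedding.subtype_apply]
  constructor
  · rintro ⟨a, b, ⟨ha, hb, hab, hlt⟩, rfl⟩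
    exact ⟨mkPair hab, ⟨⟨a, ha, b, hb, rfl⟩, hlt⟩, rfl⟩
  · rintro ⟨e, ⟨⟨a, ha, b, hb, he⟩, hlt⟩, rfl⟩
    exact ⟨a, b, ⟨ha, hb, by rwa [← SimpleGraph.mem_edgeSet, ← he, mem_edgeSet_labelGraph]⟩,
      he.symm⟩

theorem card_interedges_labelGraph_le [LT α] [DecidableLT α] (u : Pair V → α) (p : α)
    (A B : Finset V) :
    #((labelGraph u p).interedges A B) ≤ 2 * #{e ∈ pairsBetween A B | u e < p} := by
  rw [← card_map (Function.Embedding.subtype _), ← image_interedges_labelGraph]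
  refine card_le_mul_card_image _ 2 fun e _ => ?_
  induction e with
  | _ a b =>
    refine (card_le_card (t := {(a, b), (b, a)}) fun ⟨c, d⟩ hcd => ?_).trans card_le_two
    simpa using (mem_filter.1 hcd).2

theorem card_interedges_labelGraph [LT α] [DecidableLT α] (u : Pair V → α) (p : α)
    {A B : Finset V} (hAB : Disjoint A B) :
    #((labelGraph u p).interedges A B) = #{e ∈ pairsBetween A B | u e < p} := by
  rw [← card_map (Function.Embedding.subtype _), ← image_interedges_labelGraph,
    card_image_of_injOn]
  exact (injOn_sym2Mk_of_disjoint hAB).mono (coe_subset.2 (filter_subset _ _))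

theorem card_pairsBetween_le (A B : Finset V) : #(pairsBetween A B) ≤ #A * #B := by
  rw [← card_map (Function.Embedding.subtype _), ← card_product]
  refine (card_le_card ?_).trans (card_image_le (f := fun q : V × V => s(q.1, q.2)))
  intro e he
  obtain ⟨e, hmem, rfl⟩ := Finset.mem_map.1 he
  obtain ⟨a, ha, b, hb, h⟩ := (mem_filter.1 hmem).2
  exact mem_image.2 ⟨(a, b), mem_product.2 ⟨ha, hb⟩, h.symm⟩

theorem card_pairsBetween_of_disjoint {A B : Finset V} (hAB : Disjoint A B) :
    #(pairsBetween A B) = #A * #B := by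
  have hcount := card_interedges_labelGraph (fun _ : Pair V => 0) 1 hAB
  rw [filter_true_of_mem (by simp), SimpleGraph.interedges_def, filter_true_of_mem,
    card_product] at hcount
  · exact hcount.symm
  · rintro ⟨a, b⟩ hab
    exact ⟨disjoint_iff_ne.1 hAB a (mem_product.1 hab).1 b (mem_product.1 hab).2, one_pos⟩

end Counting

/-! ### Random graph estimates -/

theorem sum_pow_card {V : Type*} [Fintype V] (r : ℝ) :
    ∑ S : Finset V, r ^ #S = (1 + r) ^ Fintype.card V := by
  simpa [add_comm] using Fintype.sum_pow_mul_eq_add_pow V r 1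

section Events

variable {V : Type*} [Fintype V] [DecidableEq V] {p : unitInterval} {z : ℝ}

theorem measureReal_forall_exists_adj_le [Nontrivial V] (hp : p < 1) :
    volume.real {u : Pair V → unitInterval | ∀ i, ∃ j, (labelGraph u p).Adj i j} ≤
      1 / (Fintype.card V * (1 - p) ^ (Fintype.card V - 1)) + p / (1 - p) := by
  refine (measureReal_mono fun u hu i => ?_).trans (measureReal_forall_exists_lt_le (F := star)
    (by have := Fintype.one_lt_card (α := V); lia) card_star
    (fun i j => card_star_union_star) hp)
  obtain ⟨j, hij, hlt⟩ := hu i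
  exact ⟨_, mkPair_mem_star hij, hlt⟩

theorem measureReal_exists_degree_le_le (p : unitInterval) (hz₀ : 0 < z) (hz₁ : z ≤ 1) (k : ℕ) :
    volume.real {u : Pair V → unitInterval | ∃ i, (labelGraph u p).degree i ≤ k} ≤
      Fintype.card V * (z⁻¹ ^ k * Real.exp (-(p * (1 - z) * (Fintype.card V - 1 : ℕ)))) := by
  rw [← card_univ, ← nsmul_eq_mul, ← sum_const]
  simpa only [mem_univ, true_and] using measureReal_exists_le_sum (s := univ)
    (P := fun (i : V) u => (labelGraph u p).degree i ≤ k) fun i _ => by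
      simpa only [degree_labelGraph, card_star, card_univ] using
        measureReal_card_le_le (star i) p hz₀ hz₁ k

theorem measureReal_isLight_isLight_le (p₀ p₁ : unitInterval) (hz₀ : 0 < z) (hz₁ : z ≤ 1) {i j : V}
    (hij : i ≠ j) {E : Finset (Pair V)} (hE : #E ≤ 2) :
    volume.real {u | IsLight (labelGraph u p₀) i ∧ IsLight (labelGraph u p₀) j ∧
        ∀ e ∈ E, u e < p₁} ≤
      p₁ ^ #E * z⁻¹ ^ 18 * Real.exp (-(p₀ * (1 - z) * (2 * Fintype.card V - 5))) := by
  set F := (star i ∪ star j) \ E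
  have hcardF : (2 * Fintype.card V - 5 : ℝ) ≤ #F := by
    have hunion := card_star_union_star hij
    have hsdiff : #(star i ∪ star j) - #E ≤ #F := le_card_sdiff _ _
    have : 2 * Fintype.card V ≤ #F + 5 := by lia
    have : (2 * Fintype.card V : ℝ) ≤ #F + 5 := mod_cast this
    linarith
  refine (measureReal_mono ?_).trans ((measureReal_forall_lt_and_card_le_le disjoint_sdiff p₀ p₁ hz₀
    hz₁ 18).trans (b := p₁ ^ #E * z⁻¹ ^ 18 * Real.exp (-(p₀ * (1 - z) * #F))) ?_)
  · rintro u ⟨hi, hj, hlt⟩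
    refine ⟨hlt, ?_⟩
    rw [IsLight, degree_labelGraph] at hi hj
    have hsubset : {e ∈ F | u e < p₀} ⊆ {e ∈ star i | u e < p₀} ∪ {e ∈ star j | u e < p₀} := by
      rw [← filter_union]
      exact filter_subset_filter _ sdiff_subset
    calc #{e ∈ F | u e < p₀} ≤ #{e ∈ star i | u e < p₀} + #{e ∈ star j | u e < p₀} :=
          (card_le_card hsubset).trans (card_union_le _ _)
      _ ≤ 18 := add_le_add (Nat.le_of_lt_succ hi) (Nat.le_of_lt_succ hj)
  · have := p₀.2.1
    have := p₁.2.1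
    have : 0 ≤ 1 - z := by linarith
    gcongr

theorem measureReal_exists_isLight_isLight_le (p₀ p₁ : unitInterval) (hz₀ : 0 < z) (hz₁ : z ≤ 1)
    {κ : Type*} {T : Finset κ} {a b : κ → V} {E : κ → Finset (Pair V)} {m : ℕ}
    (hab : ∀ t ∈ T, a t ≠ b t) (hE : ∀ t ∈ T, #(E t) = m) (hm : m ≤ 2) :
    volume.real {u | ∃ t ∈ T, IsLight (labelGraph u p₀) (a t) ∧ IsLight (labelGraph u p₀) (b t) ∧
        ∀ e ∈ E t, u e < p₁} ≤
      #T * (p₁ ^ m * z⁻¹ ^ 18 * Real.exp (-(p₀ * (1 - z) * (2 * Fintype.card V - 5)))) := by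
  rw [← nsmul_eq_mul, ← sum_const]
  refine measureReal_exists_le_sum fun t ht => ?_
  rw [← hE t ht]
  exact measureReal_isLight_isLight_le p₀ p₁ hz₀ hz₁ (hab t ht) ((hE t ht).trans_le hm)

theorem measureReal_le_card_interedges_self_le (p : unitInterval) {y : ℝ} (hy : 1 ≤ y)
    (S : Finset V) (k : ℕ) :
    volume.real {u : Pair V → unitInterval | 2 * k ≤ #((labelGraph u p).interedges S S)} ≤
      y⁻¹ ^ k * Real.exp (p * y * #(pairsBetween S S)) := by
  refine (measureReal_mono fun u (hu : 2 * k ≤ _) => ?_).trans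
    (measureReal_le_card_le (pairsBetween S S) p hy k)
  have := hu.trans (card_interedges_labelGraph_le u p S S)
  rw [Set.mem_ofPred_eq]
  lia

theorem measureReal_eight_mul_card_le_card_interedges_self_le (p : unitInterval) {y : ℝ}
    (hy : 1 ≤ y) {S : Finset V} (hS : #S ≤ y) :
    volume.real {u : Pair V → unitInterval | 8 * #S ≤ #((labelGraph u p).interedges S S)} ≤
      (y⁻¹ ^ 4 * Real.exp (p * y ^ 2)) ^ #S := by
  have hp := p.2.1
  have hexponent : p * y * #(pairsBetween S S) ≤ #S * (p * y ^ 2) :=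
    calc p * y * #(pairsBetween S S) ≤ p * y * (#S * #S) := by
          gcongr
          exact_mod_cast card_pairsBetween_le S S
      _ ≤ p * y * (#S * y) := by gcongr
      _ = #S * (p * y ^ 2) := by ring
  calc volume.real {u : Pair V → unitInterval | 8 * #S ≤ #((labelGraph u p).interedges S S)}
      = volume.real {u : Pair V → unitInterval |
          2 * (4 * #S) ≤ #((labelGraph u p).interedges S S)} := by
        simp only [← mul_assoc, Nat.reduceMul]
    _ ≤ y⁻¹ ^ (4 * #S) * Real.exp (p * y * #(pairsBetween S S)) :=
        measureReal_le_card_interedges_self_le p hy S _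
    _ ≤ y⁻¹ ^ (4 * #S) * Real.exp (#S * (p * y ^ 2)) := by gcongr
    _ = (y⁻¹ ^ 4 * Real.exp (p * y ^ 2)) ^ #S := by rw [mul_pow, ← pow_mul, Real.exp_nat_mul]

theorem measureReal_exists_dense_le (p : unitInterval) {y : ℝ} (hy : 1 ≤ y) :
    volume.real {u : Pair V → unitInterval | ∃ S : Finset V, (S.Nonempty ∧ (#S : ℝ) ≤ y) ∧
        8 * #S ≤ #((labelGraph u p).interedges S S)} ≤
      (1 + y⁻¹ ^ 4 * Real.exp (p * y ^ 2)) ^ Fintype.card V - 1 := by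
  classical
  set r := y⁻¹ ^ 4 * Real.exp (p * y ^ 2)
  have hnonempty : ∑ S : Finset V with S.Nonempty ∧ (#S : ℝ) ≤ y, r ^ #S ≤
      ∑ S ∈ univ.erase (∅ : Finset V), r ^ #S := by
    refine sum_le_sum_of_subset_of_nonneg (fun S hS => ?_) fun _ _ _ => by positivity
    exact mem_erase.2 ⟨(mem_filter.1 hS).2.1.ne_empty, mem_univ S⟩
  rw [← sum_pow_card, ← sum_erase_add _ _ (mem_univ ∅), card_empty, pow_zero, add_sub_cancel_right]
  refine le_trans ?_ hnonempty
  simpa only [mem_filter, mem_univ, true_and] using measureReal_exists_le_sum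
    (s := {S : Finset V | S.Nonempty ∧ (#S : ℝ) ≤ y}) fun S hS =>
      measureReal_eight_mul_card_le_card_interedges_self_le p hy (mem_filter.1 hS).2.2

theorem measureReal_card_interedges_le_le (p : unitInterval) (hz₀ : 0 < z) (hz₁ : z ≤ 1)
    {A B : Finset V} (hAB : Disjoint A B) (k : ℕ) :
    volume.real {u : Pair V → unitInterval | #((labelGraph u p).interedges A B) ≤ k} ≤
      z⁻¹ ^ k * Real.exp (-(p * (1 - z) * (#A * #B))) := by
  simpa only [card_interedges_labelGraph _ _ hAB, card_pairsBetween_of_disjoint hAB,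
    Nat.cast_mul] using measureReal_card_le_le (pairsBetween A B) p hz₀ hz₁ k

theorem measureReal_card_interedges_compl_le_le (p : unitInterval) (hz₀ : 0 < z) (hz₁ : z ≤ 1)
    {S : Finset V} (hS : 10 * #S ≤ Fintype.card V) :
    volume.real {u : Pair V → unitInterval | #((labelGraph u p).interedges S Sᶜ) ≤ #S} ≤
      (z⁻¹ * Real.exp (-(p * (1 - z) * (9 / 10 * Fintype.card V)))) ^ #S := by
  have hp := p.2.1
  have hz : 0 ≤ 1 - z := by linarith
  have hcompl : 9 / 10 * Fintype.card V ≤ (#Sᶜ : ℝ) := by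
    have : (10 * #S : ℝ) ≤ Fintype.card V := mod_cast hS
    have : (#S + #Sᶜ : ℝ) = Fintype.card V := mod_cast card_add_card_compl S
    linarith
  calc volume.real {u : Pair V → unitInterval | #((labelGraph u p).interedges S Sᶜ) ≤ #S}
      ≤ z⁻¹ ^ #S * Real.exp (-(p * (1 - z) * (#S * #Sᶜ))) :=
        measureReal_card_interedges_le_le p hz₀ hz₁ disjoint_compl_right _
    _ ≤ z⁻¹ ^ #S * Real.exp (-(p * (1 - z) * (#S * (9 / 10 * Fintype.card V)))) := by gcongr
    _ = (z⁻¹ * Real.exp (-(p * (1 - z) * (9 / 10 * Fintype.card V)))) ^ #S := by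
        rw [mul_pow, ← Real.exp_nat_mul]
        ring_nf

theorem measureReal_exists_card_interedges_compl_le_le (p : unitInterval) (hz₀ : 0 < z)
    (hz₁ : z ≤ 1) (y : ℝ) :
    volume.real {u : Pair V → unitInterval | ∃ S : Finset V,
        (y ≤ #S ∧ 10 * #S ≤ Fintype.card V) ∧ #((labelGraph u p).interedges S Sᶜ) ≤ #S} ≤
      Real.exp (-y) * (1 + Real.exp 1 * z⁻¹ *
        Real.exp (-(p * (1 - z) * (9 / 10 * Fintype.card V)))) ^ Fintype.card V := by
  classical
  set r := z⁻¹ * Real.exp (-(p * (1 - z) * (9 / 10 * Fintype.card V)))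
  have hweighted (S : Finset V) (hS : y ≤ #S) :
      r ^ #S ≤ Real.exp (-y) * (Real.exp 1 * r) ^ #S := by
    rw [mul_pow (Real.exp 1), ← Real.exp_nat_mul, mul_one, ← mul_assoc, ← Real.exp_add]
    exact le_mul_of_one_le_left (by positivity) (Real.one_le_exp (by linarith))
  rw [mul_assoc (Real.exp 1)]
  calc volume.real {u : Pair V → unitInterval | ∃ S : Finset V,
        (y ≤ #S ∧ 10 * #S ≤ Fintype.card V) ∧ #((labelGraph u p).interedges S Sᶜ) ≤ #S}
      ≤ ∑ S : Finset V with y ≤ #S ∧ 10 * #S ≤ Fintype.card V,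
          Real.exp (-y) * (Real.exp 1 * r) ^ #S := by
        simpa only [mem_filter, mem_univ, true_and] using measureReal_exists_le_sum
          (s := {S : Finset V | y ≤ #S ∧ 10 * #S ≤ Fintype.card V}) fun S hS =>
            (measureReal_card_interedges_compl_le_le p hz₀ hz₁ (mem_filter.1 hS).2.2).trans
              (hweighted S (mem_filter.1 hS).2.1)
    _ ≤ ∑ S : Finset V, Real.exp (-y) * (Real.exp 1 * r) ^ #S :=
        sum_le_univ_sum_of_nonneg fun S => by positivity
    _ = Real.exp (-y) * (1 + Real.exp 1 * r) ^ Fintype.card V := by rw [← mul_sum, sum_pow_card]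

theorem measureReal_card_interedges_le_card_le (p : unitInterval) (hz₀ : 0 < z) (hz₁ : z ≤ 1)
    {A B : Finset V} (hAB : Disjoint A B) (hA : Fintype.card V ≤ 10 * #A)
    (hB : Fintype.card V ≤ 10 * #B) :
    volume.real {u : Pair V → unitInterval |
        #((labelGraph u p).interedges A B) ≤ Fintype.card V} ≤
      (z⁻¹ * Real.exp (-(p * (1 - z) * (Fintype.card V / 100)))) ^ Fintype.card V := by
  have hp := p.2.1
  have hz : 0 ≤ 1 - z := by linarith
  have hcardA : (Fintype.card V / 10 : ℝ) ≤ #A := by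
    rw [div_le_iff₀' (by norm_num)]
    exact_mod_cast hA
  have hcardB : (Fintype.card V / 10 : ℝ) ≤ #B := by
    rw [div_le_iff₀' (by norm_num)]
    exact_mod_cast hB
  calc volume.real {u : Pair V → unitInterval |
        #((labelGraph u p).interedges A B) ≤ Fintype.card V}
      ≤ z⁻¹ ^ Fintype.card V * Real.exp (-(p * (1 - z) * (#A * #B))) :=
        measureReal_card_interedges_le_le p hz₀ hz₁ hAB _
    _ ≤ z⁻¹ ^ Fintype.card V *
          Real.exp (-(p * (1 - z) * (Fintype.card V / 10 * (Fintype.card V / 10)))) := by gcongr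
    _ = (z⁻¹ * Real.exp (-(p * (1 - z) * (Fintype.card V / 100)))) ^ Fintype.card V := by
        rw [mul_pow, ← Real.exp_nat_mul]
        ring_nf

theorem measureReal_exists_card_interedges_le_card_le (p : unitInterval) (hz₀ : 0 < z)
    (hz₁ : z ≤ 1) :
    volume.real {u : Pair V → unitInterval | ∃ T : Finset V × Finset V, (Disjoint T.1 T.2 ∧
        Fintype.card V ≤ 10 * #T.1 ∧ Fintype.card V ≤ 10 * #T.2) ∧
        #((labelGraph u p).interedges T.1 T.2) ≤ Fintype.card V} ≤
      (4 * z⁻¹ * Real.exp (-(p * (1 - z) * (Fintype.card V / 100)))) ^ Fintype.card V := by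
  classical
  set r := z⁻¹ * Real.exp (-(p * (1 - z) * (Fintype.card V / 100))) with hr
  have hcount : ∑ _T : Finset V × Finset V, r ^ Fintype.card V = (4 * r) ^ Fintype.card V := by
    simp only [sum_const, card_univ, Fintype.card_prod, Fintype.card_finset, nsmul_eq_mul,
      Nat.cast_mul, Nat.cast_pow, Nat.cast_ofNat]
    rw [← mul_pow, ← mul_pow]
    norm_num
  rw [mul_assoc, ← hr, ← hcount]
  refine le_trans ?_ (sum_le_univ_sum_of_nonneg (s := {T : Finset V × Finset V | Disjoint T.1 T.2 ∧
    Fintype.card V ≤ 10 * #T.1 ∧ Fintype.card V ≤ 10 * #T.2}) fun _ => by positivity)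
  simpa only [mem_filter, mem_univ, true_and] using measureReal_exists_le_sum
    (s := {T : Finset V × Finset V | Disjoint T.1 T.2 ∧ Fintype.card V ≤ 10 * #T.1 ∧
      Fintype.card V ≤ 10 * #T.2}) fun T hT =>
        have hT := (mem_filter.1 hT).2
        measureReal_card_interedges_le_card_le p hz₀ hz₁ hT.1 hT.2.1 hT.2.2

end Events

/-! ### Logarithmic thresholds -/

/-- The event `P n` has probability tending to one as `n → ∞`. -/
def WithHighProbability {Ω : ℕ → Type*} [∀ n, MeasureSpace (Ω n)] (P : ∀ n, Ω n → Prop) : Prop :=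
  Tendsto (fun n => volume.real {ω | ¬ P n ω}) atTop (𝓝 0)

namespace WithHighProbability

variable {Ω : ℕ → Type*} [∀ n, MeasureSpace (Ω n)] [∀ n, IsFiniteMeasure (volume : Measure (Ω n))]
  {P Q : ∀ n, Ω n → Prop}

theorem of_le {b : ℕ → ℝ} (hPQ : ∀ n ω, ¬ P n ω → Q n ω)
    (hle : ∀ᶠ n in atTop, volume.real {ω | Q n ω} ≤ b n) (hb : Tendsto b atTop (𝓝 0)) :
    WithHighProbability P :=
  squeeze_zero' (Eventually.of_forall fun _ => measureReal_nonneg)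
    (hle.mono fun n hn => (measureReal_mono (hPQ n)).trans hn) hb

theorem mono (hP : WithHighProbability P) (h : ∀ᶠ n in atTop, ∀ ω, P n ω → Q n ω) :
    WithHighProbability Q :=
  squeeze_zero' (Eventually.of_forall fun _ => measureReal_nonneg)
    (h.mono fun n hn => measureReal_mono fun ω hω hPω => hω (hn ω hPω)) hP

theorem and (hP : WithHighProbability P) (hQ : WithHighProbability Q) :
    WithHighProbability fun n ω => P n ω ∧ Q n ω := by
  refine squeeze_zero (fun _ => measureReal_nonneg) (fun n => ?_) (by simpa using hP.add hQ)
  refine (measureReal_mono fun ω hω => ?_).trans (measureReal_union_le _ _)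
  exact not_and_or.1 hω

end WithHighProbability

section LogarithmicThreshold

theorem tendsto_log_natCast_atTop : Tendsto (fun n : ℕ => Real.log n) atTop atTop :=
  Real.tendsto_log_atTop.comp tendsto_natCast_atTop_atTop

theorem tendsto_log_pow_mul_exp_log_mul {a : ℕ → ℝ} {b : ℝ} (k : ℕ) (ha : Tendsto a atTop (𝓝 b))
    (hb : b < 0) :
    Tendsto (fun n : ℕ => Real.log n ^ k * Real.exp (Real.log n * a n)) atTop (𝓝 0) := by
  have hdecay : Tendsto (fun n : ℕ => Real.log n ^ k * Real.exp (-(-b / 2) * Real.log n))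
      atTop (𝓝 0) := by
    simpa only [Function.comp_def, Real.rpow_natCast] using
      (tendsto_rpow_mul_exp_neg_mul_atTop_nhds_zero k (-b / 2) (by linarith)).comp
        tendsto_log_natCast_atTop
  have hlog (n : ℕ) : 0 ≤ Real.log n := Real.log_natCast_nonneg n
  refine squeeze_zero' (Eventually.of_forall fun n => by have := hlog n; positivity) ?_ hdecay
  filter_upwards [ha.eventually_le_const (show b < b / 2 by linarith)] with n hn
  have hexponent : Real.log n * a n ≤ -(-b / 2) * Real.log n := by
    rw [mul_comm]
    exact mul_le_mul_of_nonneg_right (by linarith) (hlog n)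
  have := hlog n
  gcongr

theorem tendsto_exp_log_mul {a : ℕ → ℝ} {b : ℝ} (ha : Tendsto a atTop (𝓝 b)) (hb : b < 0) :
    Tendsto (fun n : ℕ => Real.exp (Real.log n * a n)) atTop (𝓝 0) := by
  simpa using tendsto_log_pow_mul_exp_log_mul 0 ha hb

theorem exists_lt_mul_one_sub {b c : ℝ} (hb : 0 < b) (hbc : b < c) :
    ∃ z, 0 < z ∧ z ≤ 1 ∧ b < c * (1 - z) := by
  have hc : 0 < c := hb.trans hbc
  refine ⟨(1 - b / c) / 2, ?_, ?_, ?_⟩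
  · have : b / c < 1 := (div_lt_one hc).2 hbc
    linarith
  · have : 0 < b / c := div_pos hb hc
    linarith
  · field_simp
    linarith

/-- The edge density `c * log n / n`, truncated to the unit interval. -/
noncomputable def threshold (c : ℝ) (n : ℕ) : unitInterval :=
  Set.projIcc 0 1 zero_le_one (c * Real.log n / n)

variable {c : ℝ}

theorem tendsto_mul_log_div (c : ℝ) :
    Tendsto (fun n : ℕ => c * Real.log n / n) atTop (𝓝 0) := by
  simpa [mul_div_assoc] using ((Real.isLittleO_log_id_atTop.tendsto_div_nhds_zero).comp
    tendsto_natCast_atTop_atTop).const_mul c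

theorem eventually_coe_threshold_eq (hc : 0 ≤ c) :
    ∀ᶠ n : ℕ in atTop, (threshold c n : ℝ) = c * Real.log n / n := by
  filter_upwards [(tendsto_mul_log_div c).eventually_le_const one_pos] with n hn
  have hlog := Real.log_natCast_nonneg n
  rw [threshold, Set.projIcc_of_mem zero_le_one ⟨by positivity, hn⟩]

theorem tendsto_coe_threshold (hc : 0 ≤ c) :
    Tendsto (fun n => (threshold c n : ℝ)) atTop (𝓝 0) :=
  (tendsto_mul_log_div c).congr' ((eventually_coe_threshold_eq hc).mono fun _ => Eq.symm)

theorem eventually_exp_log_natCast : ∀ᶠ n : ℕ in atTop, Real.exp (Real.log n) = n := by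
  filter_upwards [eventually_gt_atTop 0] with n hn
  exact Real.exp_log (by positivity)

end LogarithmicThreshold

section Degrees

variable {c c₀ c₁ : ℝ}

theorem exp_neg_nat_mul_le_one_sub_pow {p : ℝ} (hp : p < 1) (n : ℕ) :
    Real.exp (-(n * (p / (1 - p)))) ≤ (1 - p) ^ n := by
  have hpos : 0 < 1 - p := sub_pos.2 hp
  have hlog : -(p / (1 - p)) ≤ Real.log (1 - p) := by
    convert Real.one_sub_inv_le_log_of_pos hpos using 1
    field_simp
    ring
  rw [← mul_neg, Real.exp_nat_mul]
  gcongr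
  exact (Real.le_log_iff_exp_le hpos).1 hlog

theorem withHighProbability_exists_isolated (hc₀ : 0 ≤ c) (hc₁ : c < 1) :
    WithHighProbability fun n (u : Pair (Fin n) → unitInterval) =>
      ∃ i, ∀ j, ¬ (labelGraph u (threshold c n)).Adj i j := by
  have hp := tendsto_coe_threshold hc₀
  have hq : Tendsto (fun n => 1 - (threshold c n : ℝ)) atTop (𝓝 1) := by
    simpa using hp.const_sub 1
  refine .of_le (b := fun n => Real.exp (Real.log n * (c / (1 - threshold c n) - 1)) +
    threshold c n / (1 - threshold c n)) (fun n u hu => by push Not at hu; exact hu) ?_ ?_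
  · filter_upwards [eventually_coe_threshold_eq hc₀, hq.eventually_const_lt one_pos,
      eventually_gt_atTop 1, eventually_exp_log_natCast] with n hthreshold hpos hn hexp
    have : Nontrivial (Fin n) := Fin.nontrivial_iff_two_le.2 hn
    refine (measureReal_forall_exists_adj_le (Subtype.coe_lt_coe.1 (sub_pos.1 hpos))).trans ?_
    rw [Fintype.card_fin]
    set p : ℝ := (threshold c n : ℝ)
    have hlower : Real.exp (-(c * Real.log n / (1 - p))) ≤ (1 - p) ^ (n - 1) :=
      calc Real.exp (-(c * Real.log n / (1 - p))) = Real.exp (-(n * (p / (1 - p)))) := by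
            rw [hthreshold]
            field_simp
        _ ≤ (1 - p) ^ n := exp_neg_nat_mul_le_one_sub_pow (sub_pos.1 hpos) n
        _ ≤ (1 - p) ^ (n - 1) :=
            pow_le_pow_of_le_one hpos.le (by linarith [(threshold c n).2.1]) (n.sub_le 1)
    gcongr
    calc 1 / (n * (1 - p) ^ (n - 1))
        ≤ 1 / (Real.exp (Real.log n) * Real.exp (-(c * Real.log n / (1 - p)))) := by
          rw [hexp]
          gcongr
      _ = Real.exp (Real.log n * (c / (1 - p) - 1)) := by
          rw [← Real.exp_add, one_div, ← Real.exp_neg]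
          ring_nf
  · have hlimit : Tendsto (fun n => c / (1 - (threshold c n : ℝ)) - 1) atTop (𝓝 (c - 1)) := by
      simpa using (tendsto_const_nhds.div hq one_ne_zero).sub_const 1
    simpa using (tendsto_exp_log_mul hlimit (by linarith)).add (hp.div hq one_ne_zero)

theorem withHighProbability_forall_lt_degree (hc : 1 < c) (k : ℕ) :
    WithHighProbability fun n (u : Pair (Fin n) → unitInterval) =>
      ∀ i, k < (labelGraph u (threshold c n)).degree i := by
  obtain ⟨z, hz₀, hz₁, hz⟩ := exists_lt_mul_one_sub one_pos hc
  refine .of_le (b := fun n => z⁻¹ ^ k * Real.exp (Real.log n * (1 - c * (1 - z) * (1 - 1 / n))))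
    (fun n u hu => by simpa only [not_forall, not_lt] using hu) ?_ ?_
  · filter_upwards [eventually_coe_threshold_eq (c := c) (by linarith), eventually_gt_atTop 0,
      eventually_exp_log_natCast] with n hthreshold hn hexp
    refine (measureReal_exists_degree_le_le _ hz₀ hz₁ k).trans_eq ?_
    have hn' : (n : ℝ) ≠ 0 := by positivity
    rw [Fintype.card_fin, hthreshold, Nat.cast_sub hn, Nat.cast_one]
    nth_rewrite 1 [← hexp]
    rw [mul_left_comm, ← Real.exp_add]
    congr 2
    field_simp
    ring
  · have hlimit : Tendsto (fun n : ℕ => 1 - c * (1 - z) * (1 - 1 / (n : ℝ))) atTop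
        (𝓝 (1 - c * (1 - z))) := by
      simpa using ((tendsto_one_div_atTop_nhds_zero_nat.const_sub (1 : ℝ)).const_mul _).const_sub 1
    simpa using (tendsto_exp_log_mul hlimit (by linarith)).const_mul (z⁻¹ ^ k)

theorem withHighProbability_forall_isLight_not_isLight {κ : ℕ → Type*} {T : ∀ n, Finset (κ n)}
    {a b : ∀ n, κ n → Fin n} {E : ∀ n, κ n → Finset (Pair (Fin n))} {m : ℕ} (hm : m ≤ 2)
    (hT : ∀ᶠ n in atTop, #(T n) ≤ n ^ (m + 1)) (hab : ∀ n, ∀ t ∈ T n, a n t ≠ b n t)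
    (hE : ∀ n, ∀ t ∈ T n, #(E n t) = m) (hc₀ : 1 / 2 < c₀) (hc₁ : 0 ≤ c₁) :
    WithHighProbability fun n (u : Pair (Fin n) → unitInterval) =>
      ∀ t ∈ T n, IsLight (labelGraph u (threshold c₀ n)) (a n t) →
        IsLight (labelGraph u (threshold c₀ n)) (b n t) →
          ¬ ∀ e ∈ E n t, u e < threshold c₁ n := by
  obtain ⟨z, hz₀, hz₁, hz⟩ := exists_lt_mul_one_sub one_half_pos hc₀
  refine .of_le (b := fun n => c₁ ^ m * z⁻¹ ^ 18 * (Real.log n ^ m *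
    Real.exp (Real.log n * (1 - c₀ * (1 - z) * (2 - 5 / n)))))
    (fun n u hu => by push Not at hu; exact hu) ?_ ?_
  · filter_upwards [eventually_coe_threshold_eq (c := c₀) (by linarith),
      eventually_coe_threshold_eq hc₁, eventually_gt_atTop 0,
      eventually_exp_log_natCast, hT] with n hthreshold₀ hthreshold₁ hn hexp hcard
    refine (measureReal_exists_isLight_isLight_le _ _ hz₀ hz₁ (hab n) (hE n) hm).trans ?_
    have hn' : (n : ℝ) ≠ 0 := by positivity
    have hlog := Real.log_natCast_nonneg n
    have hexponent : c₀ * Real.log n / n * (1 - z) * (2 * n - 5) =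
        c₀ * (1 - z) * Real.log n * (2 - 5 / n) := by
      field_simp
    rw [Fintype.card_fin, hthreshold₀, hthreshold₁, hexponent]
    calc _ ≤ (n : ℝ) ^ (m + 1) * ((c₁ * Real.log n / n) ^ m * z⁻¹ ^ 18 *
          Real.exp (-(c₀ * (1 - z) * Real.log n * (2 - 5 / n)))) := by
          gcongr
          exact_mod_cast hcard
      _ = c₁ ^ m * z⁻¹ ^ 18 * (Real.log n ^ m * (Real.exp (Real.log n) *
            Real.exp (-(c₀ * (1 - z) * Real.log n * (2 - 5 / n))))) := by
          rw [hexp, pow_succ, div_pow, mul_pow]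
          field_simp
      _ = _ := by
          rw [← Real.exp_add]
          ring_nf
  · have hlimit : Tendsto (fun n : ℕ => 1 - c₀ * (1 - z) * (2 - 5 / (n : ℝ))) atTop
        (𝓝 (1 - c₀ * (1 - z) * 2)) := by
      simpa using
        (((tendsto_const_div_atTop_nhds_zero_nat 5).const_sub (2 : ℝ)).const_mul _).const_sub 1
    simpa using (tendsto_log_pow_mul_exp_log_mul m hlimit (by linarith)).const_mul _

end Degrees

section Expansion

variable {c : ℝ}

theorem one_add_pow_le_exp {r : ℝ} (hr : 0 ≤ r) (n : ℕ) : (1 + r) ^ n ≤ Real.exp (n * r) := by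
  rw [Real.exp_nat_mul]
  gcongr
  linarith [Real.add_one_le_exp r]

theorem exp_log_div_three_pow {n : ℕ} (hn : 0 < n) : Real.exp (Real.log n / 3) ^ 3 = n := by
  rw [← Real.exp_nat_mul, Nat.cast_ofNat, mul_div_cancel₀ _ three_ne_zero,
    Real.exp_log (by positivity)]

theorem eventually_measureReal_exists_dense_le (hc : 0 ≤ c) :
    ∀ᶠ n in atTop, volume.real {u : Pair (Fin n) → unitInterval | ∃ S : Finset (Fin n),
        (S.Nonempty ∧ #S ^ 3 ≤ n) ∧ 8 * #S ≤ #((labelGraph u (threshold c n)).interedges S S)} ≤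
      Real.exp (Real.exp (Real.log n * (c * Real.exp (-(Real.log n / 3)) - 1 / 3))) - 1 := by
  filter_upwards [eventually_coe_threshold_eq hc, eventually_gt_atTop 0] with n hthreshold hn
  have hlog := Real.log_natCast_nonneg n
  have hcube := exp_log_div_three_pow hn
  set y := Real.exp (Real.log n / 3) with hy
  have hbound := measureReal_exists_dense_le (V := Fin n) (threshold c n)
    (show 1 ≤ y from Real.one_le_exp (by positivity))
  have hcoeff : n * y⁻¹ ^ 4 = y⁻¹ := by
    rw [← hcube]
    field_simp
  have hexponent : c * Real.log n / n * y ^ 2 = c * Real.log n * y⁻¹ := by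
    nth_rewrite 2 [← hcube]
    field_simp
  rw [Fintype.card_fin, hthreshold, hexponent] at hbound
  refine (measureReal_mono ?_).trans (hbound.trans ?_)
  · rintro u ⟨S, ⟨hS, hcard⟩, hle⟩
    refine ⟨S, ⟨hS, le_of_pow_le_pow_left₀ three_ne_zero (by positivity) ?_⟩, hle⟩
    rw [hcube]
    exact_mod_cast hcard
  · gcongr
    refine (one_add_pow_le_exp (by positivity) n).trans_eq ?_
    rw [← mul_assoc, hcoeff, hy, ← Real.exp_neg, ← Real.exp_add]
    ring_nf

theorem withHighProbability_forall_card_interedges_lt (hc : 0 ≤ c) :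
    WithHighProbability fun n (u : Pair (Fin n) → unitInterval) =>
      ∀ S : Finset (Fin n), S.Nonempty → #S ^ 3 ≤ n →
        #((labelGraph u (threshold c n)).interedges S S) < 8 * #S := by
  refine .of_le (fun n u hu => ?_) (eventually_measureReal_exists_dense_le hc) ?_
  · push Not at hu
    simpa only [and_assoc] using hu
  · have hdecay : Tendsto (fun n : ℕ => Real.exp (-(Real.log n / 3))) atTop (𝓝 0) :=
      Real.tendsto_exp_neg_atTop_nhds_zero.comp
        (tendsto_log_natCast_atTop.atTop_div_const three_pos)
    have hlimit : Tendsto (fun n : ℕ => c * Real.exp (-(Real.log n / 3)) - 1 / 3) atTop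
        (𝓝 (-1 / 3)) := by
      convert (hdecay.const_mul c).sub_const (1 / 3) using 2
      norm_num
    simpa using ((tendsto_exp_log_mul hlimit (by norm_num)).rexp).sub_const 1

theorem eventually_measureReal_exists_card_interedges_compl_le_le (hc : 0 ≤ c) {z : ℝ}
    (hz₀ : 0 < z) (hz₁ : z ≤ 1) :
    ∀ᶠ n in atTop, volume.real {u : Pair (Fin n) → unitInterval | ∃ S : Finset (Fin n),
        (n < #S ^ 3 ∧ 10 * #S ≤ n) ∧
          #((labelGraph u (threshold c n)).interedges S Sᶜ) ≤ #S} ≤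
      Real.exp (-(Real.exp (Real.log n / 3) *
        (1 - Real.exp 1 * z⁻¹ * Real.exp (Real.log n * (2 / 3 - 9 / 10 * (c * (1 - z))))))) := by
  filter_upwards [eventually_coe_threshold_eq hc, eventually_gt_atTop 0,
    eventually_exp_log_natCast] with n hthreshold hn hexp
  have hbound := measureReal_exists_card_interedges_compl_le_le (V := Fin n) (threshold c n)
    hz₀ hz₁ (Real.exp (Real.log n / 3))
  have hn' : (n : ℝ) ≠ 0 := by positivity
  have hexponent : c * Real.log n / n * (1 - z) * (9 / 10 * n) =
      Real.log n * (9 / 10 * (c * (1 - z))) := by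
    field_simp
  rw [Fintype.card_fin, hthreshold, hexponent] at hbound
  refine (measureReal_mono ?_).trans (hbound.trans ?_)
  · rintro u ⟨S, ⟨hS, hcard⟩, hle⟩
    refine ⟨S, ⟨le_of_pow_le_pow_left₀ three_ne_zero (by positivity) ?_, hcard⟩, hle⟩
    rw [exp_log_div_three_pow hn]
    exact_mod_cast hS.le
  · refine (mul_le_mul_of_nonneg_left (one_add_pow_le_exp (by positivity) n)
      (by positivity)).trans_eq ?_
    have hscale : n * Real.exp (-(Real.log n * (9 / 10 * (c * (1 - z))))) =
        Real.exp (Real.log n / 3) *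
          Real.exp (Real.log n * (2 / 3 - 9 / 10 * (c * (1 - z)))) := by
      nth_rewrite 1 [← hexp]
      rw [← Real.exp_add, ← Real.exp_add]
      ring_nf
    rw [← Real.exp_add]
    congr 1
    linear_combination Real.exp 1 * z⁻¹ * hscale

theorem withHighProbability_forall_lt_card_interedges_compl (hc : 20 / 27 < c) :
    WithHighProbability fun n (u : Pair (Fin n) → unitInterval) =>
      ∀ S : Finset (Fin n), n < #S ^ 3 → 10 * #S ≤ n →
        #S < #((labelGraph u (threshold c n)).interedges S Sᶜ) := by
  obtain ⟨z, hz₀, hz₁, hz⟩ := exists_lt_mul_one_sub (by norm_num) hc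
  refine .of_le (fun n u hu => ?_)
    (eventually_measureReal_exists_card_interedges_compl_le_le (c := c) (by linarith) hz₀ hz₁) ?_
  · push Not at hu
    simpa only [and_assoc] using hu
  · have hfactor : Tendsto (fun n : ℕ => 1 - Real.exp 1 * z⁻¹ *
        Real.exp (Real.log n * (2 / 3 - 9 / 10 * (c * (1 - z))))) atTop (𝓝 1) := by
      simpa using ((tendsto_exp_log_mul tendsto_const_nhds (by linarith)).const_mul
        (Real.exp 1 * z⁻¹)).const_sub 1
    have hgrowth : Tendsto (fun n : ℕ => Real.exp (Real.log n / 3)) atTop atTop :=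
      Real.tendsto_exp_atTop.comp (tendsto_log_natCast_atTop.atTop_div_const three_pos)
    exact Real.tendsto_exp_neg_atTop_nhds_zero.comp (hgrowth.atTop_mul_pos one_pos hfactor)

theorem withHighProbability_forall_lt_card_interedges (hc : 0 < c) :
    WithHighProbability fun n (u : Pair (Fin n) → unitInterval) =>
      ∀ A B : Finset (Fin n), Disjoint A B → n ≤ 10 * #A → n ≤ 10 * #B →
        n < #((labelGraph u (threshold c n)).interedges A B) := by
  have hbase : Tendsto (fun n : ℕ => 8 * Real.exp (Real.log n * (-c / 200))) atTop (𝓝 0) := by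
    simpa using (tendsto_exp_log_mul tendsto_const_nhds (by linarith)).const_mul 8
  refine .of_le (Q := fun n u => ∃ T : Finset (Fin n) × Finset (Fin n), (Disjoint T.1 T.2 ∧
      n ≤ 10 * #T.1 ∧ n ≤ 10 * #T.2) ∧
        #((labelGraph u (threshold c n)).interedges T.1 T.2) ≤ n)
    (fun n u hu => by push Not at hu; simpa only [Prod.exists, and_assoc] using hu) ?_ hbase
  filter_upwards [eventually_coe_threshold_eq hc.le, eventually_gt_atTop 0,
    hbase.eventually_le_const one_pos] with n hthreshold hn hle
  have hbound := measureReal_exists_card_interedges_le_card_le (V := Fin n) (threshold c n)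
    one_half_pos (by norm_num)
  rw [Fintype.card_fin] at hbound
  refine hbound.trans ?_
  have hexponent : (-(threshold c n * (1 - 1 / 2) * (n / 100)) : ℝ) =
      Real.log n * (-c / 200) := by
    rw [hthreshold]
    field_simp
    ring
  rw [hexponent, show 4 * (1 / 2 : ℝ)⁻¹ = 8 by norm_num]
  exact pow_le_of_le_one (by positivity) hle hn.ne'

end Expansion

section WhpTypical

variable {c₀ c₁ : ℝ} {x : ∀ n, Fin n → ℝ}

theorem forall_mem_pairsBetween_lt {V α : Type*} [Fintype V] [DecidableEq V] [LT α]
    {u : Pair V → α} {p : α} {A B : Finset V}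
    (h : ∀ a ∈ A, ∀ b ∈ B, (labelGraph u p).Adj a b) : ∀ e ∈ pairsBetween A B, u e < p := by
  intro e he
  obtain ⟨a, ha, b, hb, hab⟩ := (mem_filter.1 he).2
  rw [← mem_edgeSet_labelGraph, hab]
  exact h a ha b hb

theorem withHighProbability_not_adj_of_isLight (hc₀ : 1 / 2 < c₀) (hc₁ : 0 ≤ c₁) :
    WithHighProbability fun n (u : Pair (Fin n) → unitInterval) =>
      ∀ i j, IsLight (labelGraph u (threshold c₀ n)) i →
        IsLight (labelGraph u (threshold c₀ n)) j → ¬ (labelGraph u (threshold c₁ n)).Adj i j := by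
  refine (withHighProbability_forall_isLight_not_isLight (κ := fun n => Fin n × Fin n)
    (T := fun n => {t | t.1 ≠ t.2}) (a := fun n t => t.1) (b := fun n t => t.2)
    (E := fun n t => pairsBetween {t.1} {t.2}) one_le_two (.of_forall fun n => ?_)
    (fun n t ht => (mem_filter.1 ht).2) (fun n t ht => ?_) hc₀ hc₁).mono
    (.of_forall fun n u hu i j hi hj hij => ?_)
  · exact (card_filter_le _ _).trans_eq (by simp [sq])
  · simp [card_pairsBetween_of_disjoint (disjoint_singleton.2 (mem_filter.1 ht).2)]
  · exact hu (i, j) (by simp [hij.ne]) hi hj (forall_mem_pairsBetween_lt (by simpa using hij))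

theorem withHighProbability_not_common_adj_of_isLight (hc₀ : 1 / 2 < c₀) (hc₁ : 0 ≤ c₁) :
    WithHighProbability fun n (u : Pair (Fin n) → unitInterval) =>
      ∀ i j k, i ≠ j → IsLight (labelGraph u (threshold c₀ n)) i →
        IsLight (labelGraph u (threshold c₀ n)) j →
          ¬ ((labelGraph u (threshold c₁ n)).Adj i k ∧
            (labelGraph u (threshold c₁ n)).Adj j k) := by
  refine (withHighProbability_forall_isLight_not_isLight (κ := fun n => Fin n × Fin n × Fin n)
    (T := fun n => {t | t.1 ≠ t.2.1 ∧ t.1 ≠ t.2.2 ∧ t.2.1 ≠ t.2.2})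
    (a := fun n t => t.1) (b := fun n t => t.2.1)
    (E := fun n t => pairsBetween {t.1, t.2.1} {t.2.2}) le_rfl (.of_forall fun n => ?_)
    (fun n t ht => (mem_filter.1 ht).2.1) (fun n t ht => ?_) hc₀ hc₁).mono
    (.of_forall fun n u hu i j k hij hi hj hadj => ?_)
  · exact (card_filter_le _ _).trans_eq (by simp [pow_succ, mul_assoc])
  · obtain ⟨hij, hik, hjk⟩ := (mem_filter.1 ht).2
    rw [card_pairsBetween_of_disjoint (by simp [hik.symm, hjk.symm]), card_pair hij,
      card_singleton]
  · exact hu (i, j, k) (by simp [hij, hadj.1.ne, hadj.2.ne]) hi hj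
      (forall_mem_pairsBetween_lt (by simpa using hadj))

theorem withHighProbability_not_adj_of_isLight_reflection
    (hx : ∀ᶠ n in atTop, Function.Injective (x n)) (hc₀ : 1 / 2 < c₀) (hc₁ : 0 ≤ c₁) :
    WithHighProbability fun n (u : Pair (Fin n) → unitInterval) =>
      ∀ i j k, i ≠ k → x n k = 2 * x n j - x n i →
        IsLight (labelGraph u (threshold c₀ n)) i → IsLight (labelGraph u (threshold c₀ n)) k →
          ¬ (labelGraph u (threshold c₁ n)).Adj i j := by
  refine (withHighProbability_forall_isLight_not_isLight (κ := fun n => Fin n × Fin n × Fin n)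
    (T := fun n => {t | t.1 ≠ t.2.1 ∧ t.1 ≠ t.2.2 ∧ x n t.2.2 = 2 * x n t.2.1 - x n t.1})
    (a := fun n t => t.1) (b := fun n t => t.2.2)
    (E := fun n t => pairsBetween {t.1} {t.2.1}) one_le_two (hx.mono fun n hxn => ?_)
    (fun n t ht => (mem_filter.1 ht).2.2.1) (fun n t ht => ?_) hc₀ hc₁).mono
    (.of_forall fun n u hu i j k hik hxk hi hk hij => ?_)
  · refine (card_le_card_of_injOn (t := (univ : Finset (Fin n × Fin n)))
      (fun t => (t.1, t.2.1)) (fun _ _ => mem_univ _) ?_).trans_eq (by simp [sq])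
    rintro ⟨i, j, k⟩ ht ⟨i', j', k'⟩ ht' heq
    obtain ⟨rfl, rfl⟩ := Prod.mk.inj heq
    have hxk : x n k = 2 * x n j - x n i := (mem_filter.1 ht).2.2.2
    have hxk' : x n k' = 2 * x n j - x n i := (mem_filter.1 ht').2.2.2
    rw [hxn (hxk.trans hxk'.symm)]
  · simp [card_pairsBetween_of_disjoint (disjoint_singleton.2 (mem_filter.1 ht).2.1)]
  · exact hu (i, j, k) (by simp [hij.ne, hik, hxk]) hi hk
      (forall_mem_pairsBetween_lt (by simpa using hij))

theorem withHighProbability_isTypical (hx : ∀ᶠ n in atTop, Function.Injective (x n))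
    (hc₀ : 20 / 27 < c₀) (hc₀' : c₀ < 1) (hc₁ : 1 < c₁) :
    WithHighProbability fun n (u : Pair (Fin n) → unitInterval) =>
      IsTypical (x n) (labelGraph u (threshold c₀ n)) (labelGraph u (threshold c₁ n)) := by
  have hhalf : 1 / 2 < c₀ := by linarith
  have hpos₁ : 0 ≤ c₁ := by linarith
  have hproperties := (withHighProbability_exists_isolated (by linarith) hc₀').and <|
    (withHighProbability_forall_lt_degree hc₁ 1).and <|
    (withHighProbability_not_adj_of_isLight hhalf hpos₁).and <|
    (withHighProbability_not_common_adj_of_isLight hhalf hpos₁).and <|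
    (withHighProbability_not_adj_of_isLight_reflection hx hhalf hpos₁).and <|
    (withHighProbability_forall_card_interedges_lt hpos₁).and <|
    (withHighProbability_forall_lt_card_interedges_compl hc₀).and
      (withHighProbability_forall_lt_card_interedges (c := c₀) (by linarith))
  refine hproperties.mono (.of_forall fun n u ⟨hisolated, hdegree, hlight, hcommon, hreflection,
    hsparse, hcompl, hjoined⟩ => ?_)
  exact ⟨hisolated, hdegree, hlight, hcommon, hreflection, by simpa using hsparse,
    by simpa using hcompl, by simpa using hjoined⟩

end WhpTypical

instance (n : ℕ) : IsProbabilityMeasure (processMeasure n) := by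
  unfold processMeasure
  infer_instance

theorem tendsto_processMeasure_of_withHighProbability
    {P : ∀ n, (Pair (Fin n) → unitInterval) → Prop}
    {Q : ∀ n, (Fin (n.choose 2) ≃ Pair (Fin n)) → Prop} (hP : WithHighProbability P)
    (h : ∀ᶠ n in atTop, ∀ u σ, P n u → u ∈ sortedBy σ → Q n σ) :
    Tendsto (fun n => processMeasure n {σ | Q n σ}) atTop (𝓝 1) := by
  have hle : ∀ᶠ n in atTop, 1 - volume {u | ¬ P n u} ≤ processMeasure n {σ | Q n σ} := by
    filter_upwards [h] with n hn
    have hcompl : processMeasure n {σ | Q n σ}ᶜ ≤ volume {u | ¬ P n u} :=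
      uniform_le_volume MeasurableSpace.measurableSet_top fun σ hσ u hu hPu =>
        hσ (hn u σ hPu hu)
    rw [prob_compl_eq_one_sub MeasurableSpace.measurableSet_top] at hcompl
    exact tsub_le_iff_tsub_le.1 hcompl
  have hlower : Tendsto (fun n => 1 - volume {u | ¬ P n u}) atTop (𝓝 1) := by
    have hzero :=
      (ENNReal.tendsto_toReal_iff (fun n => measure_ne_top _ _) ENNReal.zero_ne_top).1 hP
    simpa using ENNReal.Tendsto.sub tendsto_const_nhds hzero (.inl ENNReal.one_ne_top)
  exact tendsto_of_tendsto_of_tendsto_of_le_of_le' hlower tendsto_const_nhds hle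
    (.of_forall fun n => prob_le_one)

end LineReconstruction

/-- Hitting time result: whp the point set becomes reconstructible exactly at the first time
`τ` at which every index has degree at least one and every index of degree one forms a
secure pair with its unique neighbour. -/
theorem statement4
    (x : (n : ℕ) → Fin n → ℝ) (hx : ∀ n, 3 ≤ n → Function.Injective (x n)) :
    Filter.Tendsto
      (fun (n : ℕ) => processMeasure n
        {σ | ∃ τ : ℕ,
          IsLeast {t : ℕ | t ≤ n.choose 2 ∧
            (∀ u : Fin n, 1 ≤ degree (Gt σ t) u) ∧
            (∀ u v : Fin n, degree (Gt σ t) u = 1 → u ≠ v → s(u, v) ∈ Gt σ t →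
              Secure (x n) u v)} τ ∧
          Reconstructible (x n) (Gt σ τ) Set.univ ∧
          ∀ t : ℕ, t < τ → ¬ Reconstructible (x n) (Gt σ t) Set.univ})
      Filter.atTop (nhds 1) := by
  have hinj : ∀ᶠ n in Filter.atTop, Function.Injective (x n) :=
    (Filter.eventually_ge_atTop 3).mono hx
  have htypical :=
    LineReconstruction.withHighProbability_isTypical hinj (c₀ := 9 / 10) (c₁ := 3) (by norm_num)
      (by norm_num) (by norm_num)
  refine LineReconstruction.tendsto_processMeasure_of_withHighProbability htypical ?_
  filter_upwards [hinj, Filter.eventually_ge_atTop 100] with n hxn hn u σ hu hσ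
  exact hu.hitting_time hn hxn hσ
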